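/- Let Ω ⊆ ℝ³ be open with the origin O on its boundary, let α > −1, and assume (QPD). If the Wiener integral diverges, i.e. ∫_0^1 cap(B̄_ρ ∖ Ω) ρ^{−2} dρ = ∞, then O is regular with respect to the Lamé system: for every f ∈ C_0^∞(Ω;ℝ³) and every u ∈ H̊¹(Ω;ℝ³) with Lu = f on Ω, one has u(x) → 0 as x → O with x ∈ Ω. -/

import Mathlib

/-!
Regularity of a boundary point for the Lamé system under (QPD) and divergence of the Wiener
integral.

Let `u` solve `Lu = f`; since `f` is supported away from the origin, `Lu = 0` in `Ω ∩ B_{2ρ}` for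
small `ρ`. Let `η` be a cutoff equal to `1` on `B_ρ` and supported in `B_{2ρ}`. Applying (QPD) to
`η u` with pole `y ∈ Ω`, `|y| < ρ / 2`, bounds `|u(y)|²` and the weighted energy
`∫ |Du|² |x - y|⁻¹` by `∫ L(η u) · Φ(x - y) η u`. As `Lu = 0`, only commutator terms supported where
`Dη ≠ 0` survive; there `Φ` is of size `1/ρ` and `DΦ` of size `1/ρ²`, so they are bounded by
`∫_{Ω ∩ B_{2ρ}} (ρ⁻³ |u|² + ρ⁻¹ |Du|²)` (`energy_upper`, `main_est`). Because (QPD) speaks of test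
fields, the argument runs through fields `w ∈ C₀^∞(Ω)` that approximate `u` in `H¹` and coincide
with `u` near `y` (`MemH10.approx_ball`).

Letting `y → 0` gives `∫ |Du|² |x|⁻¹ < ∞` near the origin (`weighted_finite`). On the other hand, the
capacitary Poincaré inequality `capa_poincare`, obtained from the usual Poincaré inequality by
testing the capacity with `η (1 - v / a)`, where `v` is a component of an approximating test field
and `a` the constant subtracted from `v` in Poincaré's inequality, turns the bound for `|u(y)|²` into
`cap(B̄_ρ ∖ Ω) |u(y)|² ≤ C ∫_{Ω ∩ B_{2ρ}} |Du|²` for all `|y| < ρ / 2` (`capa_mul_vsq_le`).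
If `u` does not tend to `0`, then `|u|² ≥ ε` at points arbitrarily close to the origin, so
`cap(B̄_ρ ∖ Ω) ≤ (C / ε) ∫_{Ω ∩ B_{2ρ}} |Du|²` for every small `ρ`. Dividing by `ρ²` and integrating,
Tonelli's theorem (`wiener_tonelli`) bounds the Wiener integral by a multiple of
`∫ |Du|² |x|⁻¹ < ∞`, a contradiction.
-/

open MeasureTheory Metric Real Filter

noncomputable section

/-- `ℝ³` as Euclidean space. -/
abbrev E3 : Type := EuclideanSpace ℝ (Fin 3)

/-- Partial derivative `∂ᵢ f` on `ℝ³`. -/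
def pd (i : Fin 3) (f : E3 → ℝ) (x : E3) : ℝ :=
  fderiv ℝ f x (EuclideanSpace.single i 1)

/-- Laplacian on `ℝ³`. -/
def lap (f : E3 → ℝ) (x : E3) : ℝ := ∑ i, pd i (pd i f) x

/-- Divergence of a vector field on `ℝ³`. -/
def divg (u : E3 → Fin 3 → ℝ) (x : E3) : ℝ := ∑ k, pd k (fun y => u y k) x

/-- The 3D Lamé operator `(Lu)ᵢ = -Δuᵢ - α ∂ᵢ (div u)`. -/
def lame (α : ℝ) (u : E3 → Fin 3 → ℝ) (x : E3) (i : Fin 3) : ℝ :=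
  - lap (fun y => u y i) x - α * pd i (divg u) x

/-- The constant `c_α = (α+2)/(8π(α+1))`. -/
def cA (α : ℝ) : ℝ := (α + 2) / (8 * Real.pi * (α + 1))

/-- The fundamental matrix `Φ` of the 3D Lamé system:
`Φ_ij(x) = c_α |x|⁻¹ (δ_ij + (α/(α+2)) xᵢxⱼ/|x|²)`. -/
def Phi (α : ℝ) (x : E3) (i j : Fin 3) : ℝ :=
  cA α * ‖x‖⁻¹ * ((if i = j then (1 : ℝ) else 0) + (α / (α + 2)) * (x i * x j) / ‖x‖ ^ 2)

/-- `u ∈ C₀^∞(U; ℝ³)`: smooth, compactly supported, with support inside `U`. -/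
def IsTestOn (U : Set E3) (u : E3 → Fin 3 → ℝ) : Prop :=
  ContDiff ℝ (⊤ : ℕ∞) u ∧ HasCompactSupport u ∧ tsupport u ⊆ U

/-- `∫_{ℝ³} (Lu)·(Φ(·-y) u) dx`. -/
def lameEnergy (α : ℝ) (u : E3 → Fin 3 → ℝ) (y : E3) : ℝ :=
  ∫ x : E3, ∑ i, ∑ j, lame α u x i * Phi α (x - y) i j * u x j

/-- (QPD): quantitative weighted positive definiteness of the Lamé system with weight `Φ`,
with constant `c₀`. -/
def QPDhyp (α c₀ : ℝ) : Prop :=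
  ∀ u : E3 → Fin 3 → ℝ, IsTestOn Set.univ u → ∀ y : E3,
    (1 / 2) * (∑ i, (u y i) ^ 2) +
      c₀ * ∫ x : E3, (∑ i, ∑ k, (pd k (fun z => u z i) x) ^ 2) * ‖x - y‖⁻¹ ≤
    lameEnergy α u y

/-- `u ∈ H̊¹(Ω; ℝ³)`: `u` is smooth on `Ω`, `∫_Ω (|u|² + |Du|²) < ∞`, and `u` is
approximated in this norm by test fields supported in `Ω`. -/
def MemH10 (Ω : Set E3) (u : E3 → Fin 3 → ℝ) : Prop :=
  ContDiffOn ℝ (⊤ : ℕ∞) u Ω ∧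
  IntegrableOn (fun x => (∑ i, (u x i) ^ 2) +
    ∑ i, ∑ k, (pd k (fun z => u z i) x) ^ 2) Ω volume ∧
  ∃ un : ℕ → E3 → Fin 3 → ℝ, (∀ n, IsTestOn Ω (un n)) ∧
    Tendsto (fun n => ∫ x in Ω, ((∑ i, (u x i - un n x i) ^ 2) +
      ∑ i, ∑ k, (pd k (fun z => u z i - un n z i) x) ^ 2)) atTop (nhds 0)

/-- `m_ρ(u) = ρ⁻³ ∫_{Ω ∩ S_ρ} |u|² dx`, where `S_ρ = {ρ < |x| < 2ρ}`. -/
def mRho (Ω : Set E3) (ρ : ℝ) (u : E3 → Fin 3 → ℝ) : ℝ :=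
  (ρ ^ 3)⁻¹ * ∫ x in Ω ∩ {x : E3 | ρ < ‖x‖ ∧ ‖x‖ < 2 * ρ}, ∑ i, (u x i) ^ 2

/-- `M_ρ(u) = ρ⁻³ ∫_{Ω ∩ B_ρ} |u|² dx`. -/
def MRho (Ω : Set E3) (ρ : ℝ) (u : E3 → Fin 3 → ℝ) : ℝ :=
  (ρ ^ 3)⁻¹ * ∫ x in Ω ∩ ball (0 : E3) ρ, ∑ i, (u x i) ^ 2

/-- The classical harmonic capacity of a set `K ⊆ ℝ³`:
`cap K = inf { ∫ |Df|² : f ∈ C₀^∞(ℝ³), f = 1 on a neighborhood of K }`. -/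
def capa (K : Set E3) : ℝ :=
  sInf {t : ℝ | ∃ f : E3 → ℝ, ContDiff ℝ (⊤ : ℕ∞) f ∧ HasCompactSupport f ∧
    (∃ U : Set E3, IsOpen U ∧ K ⊆ U ∧ ∀ x ∈ U, f x = 1) ∧
    t = ∫ x : E3, ∑ i, (pd i f x) ^ 2}

/-! ### Partial derivatives and integration by parts -/

lemma pd_congr {f g : E3 → ℝ} {x : E3} (h : f =ᶠ[nhds x] g) (k : Fin 3) : pd k f x = pd k g x := by
  unfold pd; rw [h.fderiv_eq]

lemma pd_mul {f g : E3 → ℝ} {x : E3} (hf : DifferentiableAt ℝ f x) (hg : DifferentiableAt ℝ g x)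
    (k : Fin 3) : pd k (fun z => f z * g z) x = pd k f x * g x + f x * pd k g x := by
  unfold pd
  rw [fderiv_fun_mul hf hg]
  simp
  ring

lemma pd_add {f g : E3 → ℝ} {x : E3} (hf : DifferentiableAt ℝ f x) (hg : DifferentiableAt ℝ g x)
    (k : Fin 3) : pd k (fun z => f z + g z) x = pd k f x + pd k g x := by
  unfold pd
  rw [fderiv_fun_add hf hg]
  simp

lemma pd_sub {f g : E3 → ℝ} {x : E3} (hf : DifferentiableAt ℝ f x) (hg : DifferentiableAt ℝ g x)
    (k : Fin 3) : pd k (fun z => f z - g z) x = pd k f x - pd k g x := by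
  unfold pd
  rw [fderiv_fun_sub hf hg]
  simp

lemma pd_sum {f : Fin 3 → E3 → ℝ} {x : E3} (hf : ∀ j, DifferentiableAt ℝ (f j) x)
    (k : Fin 3) : pd k (fun z => ∑ j, f j z) x = ∑ j, pd k (f j) x := by
  unfold pd
  rw [fderiv_fun_sum (fun j _ => hf j)]
  simp

lemma pd_const (c : ℝ) (x : E3) (k : Fin 3) : pd k (fun _ => c) x = 0 := by
  simp [pd]

lemma pd_eq_zero {f : E3 → ℝ} {x : E3} (h : x ∉ tsupport f) (k : Fin 3) : pd k f x = 0 := by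
  have : f =ᶠ[nhds x] (fun _ => 0) := notMem_tsupport_iff_eventuallyEq.mp h
  rw [pd_congr this, pd_const]

/-- Pointwise smoothness `C^∞` at `x` passes to partial derivatives. -/
lemma contDiffAt_pd {f : E3 → ℝ} {x : E3} (h : ContDiffAt ℝ (⊤ : ℕ∞) f x) (k : Fin 3) :
    ContDiffAt ℝ (⊤ : ℕ∞) (pd k f) x := by
  have h1 : ContDiffAt ℝ (⊤ : ℕ∞) (fderiv ℝ f) x := h.fderiv_right (by norm_cast)
  exact h1.clm_apply contDiffAt_const

lemma diffAt_of_contDiffAt {f : E3 → ℝ} {x : E3} (h : ContDiffAt ℝ (⊤ : ℕ∞) f x) :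
    DifferentiableAt ℝ f x := h.differentiableAt (by simp)

lemma contDiffAt_comp {u : E3 → Fin 3 → ℝ} {x : E3} (h : ContDiffAt ℝ (⊤ : ℕ∞) u x) (i : Fin 3) :
    ContDiffAt ℝ (⊤ : ℕ∞) (fun z => u z i) x := contDiffAt_pi.mp h i

lemma tsupport_pd (f : E3 → ℝ) (k : Fin 3) : tsupport (pd k f) ⊆ tsupport f :=
  tsupport_fderiv_apply_subset ℝ _

lemma tsupport_comp_sub (u : E3 → Fin 3 → ℝ) (i : Fin 3) :
    tsupport (fun z => u z i) ⊆ tsupport u := by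
  apply closure_mono
  intro x hx
  simp only [Function.mem_support] at hx ⊢
  intro h; apply hx; rw [h]; rfl

lemma integrable_mul_of_tsupport {v g : E3 → ℝ} (hg : Continuous g) (hgc : HasCompactSupport g)
    (hv : ∀ x ∈ tsupport g, ContinuousAt v x) : Integrable (fun x => v x * g x) := by
  apply Continuous.integrable_of_hasCompactSupport
  · apply continuous_of_tsupport
    intro x hx
    have : x ∈ tsupport g := tsupport_mul_subset_right (f := v) (g := g) hx
    exact (hv x this).mul hg.continuousAt
  · exact hgc.mul_left (f := v)

/-- Integration by parts on `ℝ³`, the first factor being smooth only near the support of the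
second. -/
lemma ibp_scalar {v g : E3 → ℝ} (hg : ContDiff ℝ (⊤ : ℕ∞) g) (hgc : HasCompactSupport g)
    (hv : ∀ x ∈ tsupport g, ContDiffAt ℝ (⊤ : ℕ∞) v x) (k : Fin 3) :
    Integrable (fun x => v x * pd k g x) ∧ Integrable (fun x => pd k v x * g x) ∧
    ∫ x, v x * pd k g x = - ∫ x, pd k v x * g x := by
  have hpg : ∀ x, ContDiffAt ℝ (⊤ : ℕ∞) (pd k g) x := fun x => contDiffAt_pd hg.contDiffAt k
  have i1 : Integrable (fun x => v x * pd k g x) := by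
    apply integrable_mul_of_tsupport
    · exact continuous_iff_continuousAt.mpr fun x => (hpg x).continuousAt
    · exact hgc.of_isClosed_subset (isClosed_tsupport _) (tsupport_pd g k)
    · exact fun x hx => (hv x (tsupport_pd g k hx)).continuousAt
  have i2 : Integrable (fun x => pd k v x * g x) :=
    integrable_mul_of_tsupport hg.continuous hgc
      fun x hx => (contDiffAt_pd (hv x hx) k).continuousAt
  refine ⟨i1, i2, ?_⟩
  apply integral_mul_fderiv_eq_neg_fderiv_mul_of_integrable (𝕜 := ℝ) i2 i1
  · exact integrable_mul_of_tsupport hg.continuous hgc fun x hx => (hv x hx).continuousAt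
  · exact fun x hx => diffAt_of_contDiffAt (hv x hx)
  · exact fun x _ => diffAt_of_contDiffAt hg.contDiffAt

/-- Pointwise integrand of the bilinear form of the Lamé operator,
`Du : Dh + α div u div h`. -/
def aform (α : ℝ) (u h : E3 → Fin 3 → ℝ) (x : E3) : ℝ :=
  (∑ i, ∑ k, pd k (fun z => u z i) x * pd k (fun z => h z i) x) + α * (divg u x * divg h x)

lemma contDiffAt_divg {u : E3 → Fin 3 → ℝ} {x : E3} (h : ContDiffAt ℝ (⊤ : ℕ∞) u x) :
    ContDiffAt ℝ (⊤ : ℕ∞) (divg u) x := by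
  unfold divg
  exact ContDiffAt.sum fun k _ => contDiffAt_pd (contDiffAt_comp h k) k

/-- Green's formula `∫ Lu · h = ∫ Du : Dh + α div u div h` for a test field `h`. -/
lemma green {U : Set E3} {α : ℝ} {u h : E3 → Fin 3 → ℝ}
    (hu : ∀ x ∈ U, ContDiffAt ℝ (⊤ : ℕ∞) u x) (hh : IsTestOn U h) :
    Integrable (aform α u h) ∧
    ∫ x, ∑ i, lame α u x i * h x i = ∫ x, aform α u h x := by
  obtain ⟨hs, hc, ht⟩ := hh
  have hsi : ∀ i, ContDiff ℝ (⊤ : ℕ∞) (fun z => h z i) := fun i => contDiff_pi.mp hs i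
  have hti : ∀ i, tsupport (fun z => h z i) ⊆ U := fun i => (tsupport_comp_sub h i).trans ht
  have hci : ∀ i, HasCompactSupport (fun z => h z i) := fun i =>
    hc.of_isClosed_subset (isClosed_tsupport _) (tsupport_comp_sub h i)
  have A : ∀ i k, _ := fun i k => ibp_scalar (hsi i) (hci i) (v := pd k (fun z => u z i))
    (fun x hx => contDiffAt_pd (contDiffAt_comp (hu x (hti i hx)) i) k) k
  have B : ∀ i, _ := fun i => ibp_scalar (hsi i) (hci i) (v := divg u)
    (fun x hx => contDiffAt_divg (hu x (hti i hx))) i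
  have e1 : aform α u h = fun x => (∑ i, ∑ k, pd k (fun z => u z i) x * pd k (fun z => h z i) x)
      + α * ∑ i, divg u x * pd i (fun z => h z i) x := by
    funext x
    simp only [aform]
    rw [← Finset.mul_sum]; rfl
  have i1 : Integrable fun x => ∑ i, ∑ k, pd k (fun z => u z i) x * pd k (fun z => h z i) x :=
    integrable_finsetSum _ fun i _ => integrable_finsetSum _ fun k _ => (A i k).1
  have i2 : Integrable fun x => α * ∑ i, divg u x * pd i (fun z => h z i) x :=
    (integrable_finsetSum _ fun i _ => (B i).1).const_mul α
  have e2 : (fun x => ∑ i, lame α u x i * h x i) = fun x =>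
      -(∑ i, ∑ k, pd k (pd k (fun z => u z i)) x * h x i)
      - α * ∑ i, pd i (divg u) x * h x i := by
    funext x
    simp only [lame, lap, Fin.sum_univ_three]
    ring
  refine ⟨e1 ▸ i1.add i2, ?_⟩
  have j1 : Integrable fun x => ∑ i, ∑ k, pd k (pd k (fun z => u z i)) x * h x i :=
    integrable_finsetSum _ fun i _ => integrable_finsetSum _ fun k _ => (A i k).2.1
  have j1n : Integrable fun x => -(∑ i, ∑ k, pd k (pd k (fun z => u z i)) x * h x i) := j1.neg
  have j2 : Integrable fun x => α * ∑ i, pd i (divg u) x * h x i :=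
    (integrable_finsetSum _ fun i _ => (B i).2.1).const_mul α
  rw [e1, e2, integral_add i1 i2, integral_sub j1n j2, integral_neg, integral_const_mul,
    integral_const_mul, integral_finsetSum _ fun i _ => integrable_finsetSum _ fun k _ => (A i k).2.1,
    integral_finsetSum _ fun i _ => integrable_finsetSum _ fun k _ => (A i k).1,
    integral_finsetSum _ fun i _ => (B i).1, integral_finsetSum _ fun i _ => (B i).2.1,
    Finset.sum_congr rfl fun i _ => (B i).2.2]
  have : ∀ i, ∫ x, ∑ k, pd k (fun z => u z i) x * pd k (fun z => h z i) x =
      - ∫ x, ∑ k, pd k (pd k (fun z => u z i)) x * h x i := by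
    intro i
    rw [integral_finsetSum _ fun k _ => (A i k).1, integral_finsetSum _ fun k _ => (A i k).2.1,
      Finset.sum_congr rfl fun k _ => (A i k).2.2, Finset.sum_neg_distrib]
  rw [Finset.sum_congr rfl fun i _ => this i, Finset.sum_neg_distrib, Finset.sum_neg_distrib]
  ring

/-! ### Cutoff functions and size of the fundamental matrix -/

lemma pd_comp_smul (f : E3 → ℝ) (c : ℝ) (k : Fin 3) (x : E3) :
    pd k (fun z => f (c • z)) x = c * pd k f (c • x) := by
  unfold pd
  rw [fderiv_comp_smul]
  simp

lemma bounded_of_compactSupport {f : E3 → ℝ} (hf : Continuous f) (hc : HasCompactSupport f) :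
    ∃ C, 0 < C ∧ ∀ x, |f x| ≤ C := by
  obtain ⟨C, hC⟩ := hf.bounded_above_of_compact_support hc
  exact ⟨max C 1, by positivity, fun x => (hC x).trans (le_max_left _ _)⟩

/-- Choose one bound for finitely many families. -/
lemma exists_bound_fin {ι : Type*} [Fintype ι] {X : Type*} {P : X → Prop} (F : ι → X → ℝ)
    (h : ∀ i, ∃ C, 0 < C ∧ ∀ x, P x → F i x ≤ C) : ∃ C, 0 < C ∧ ∀ i x, P x → F i x ≤ C := by
  choose C hC hF using h
  refine ⟨∑ i, C i + 1, by have := Finset.sum_nonneg fun i (_ : i ∈ Finset.univ) => (hC i).le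
                           linarith, fun i x hx => (hF i x hx).trans ?_⟩
  have := Finset.single_le_sum (f := C) (fun i _ => (hC i).le) (Finset.mem_univ i)
  linarith

lemma continuous_pd {f : E3 → ℝ} (hf : ContDiff ℝ (⊤ : ℕ∞) f) (k : Fin 3) : Continuous (pd k f) :=
  continuous_iff_continuousAt.mpr fun _ => (contDiffAt_pd hf.contDiffAt k).continuousAt

lemma hasCompactSupport_pd {f : E3 → ℝ} (hf : HasCompactSupport f) (k : Fin 3) :
    HasCompactSupport (pd k f) :=
  hf.of_isClosed_subset (isClosed_tsupport _) (tsupport_pd f k)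

lemma bounded_pd {f : E3 → ℝ} (hf : ContDiff ℝ (⊤ : ℕ∞) f) (hc : HasCompactSupport f) :
    ∃ C, 0 < C ∧ ∀ k x, |pd k f x| ≤ C := by
  obtain ⟨C, hC, h⟩ := exists_bound_fin (P := fun _ : E3 => True) (fun (k : Fin 3) x => |pd k f x|)
    (fun k => (bounded_of_compactSupport (continuous_pd hf k) (hasCompactSupport_pd hc k)).imp
      fun C h => ⟨h.1, fun x _ => h.2 x⟩)
  exact ⟨C, hC, fun k x => h k x trivial⟩

/-- `η` is a cutoff for the pair of balls `B_ρ ⊂ B_{2ρ}` with partial derivatives at most `C / ρ`;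
it equals `1` on the slightly larger ball of radius `5ρ/4`. -/
structure IsCutoff (C ρ : ℝ) (η : E3 → ℝ) : Prop where
  smooth : ContDiff ℝ (⊤ : ℕ∞) η
  nonneg : ∀ x, 0 ≤ η x
  le_one : ∀ x, η x ≤ 1
  one : ∀ x, ‖x‖ < 5 / 4 * ρ → η x = 1
  supp : tsupport η ⊆ ball 0 (2 * ρ)
  compact : HasCompactSupport η
  pd_le : ∀ k x, |pd k η x| ≤ C / ρ

lemma exists_cutoff : ∃ C, 0 < C ∧ ∀ ρ, 0 < ρ → ∃ η, IsCutoff C ρ η := by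
  let b : ContDiffBump (0 : E3) := ⟨5 / 4, 7 / 4, by norm_num, by norm_num⟩
  obtain ⟨C, hC, hb⟩ := bounded_pd (f := b) b.contDiff b.hasCompactSupport
  refine ⟨C, hC, fun ρ hρ => ⟨fun x => b (ρ⁻¹ • x), ?_⟩⟩
  have hs : tsupport (fun x => b (ρ⁻¹ • x)) ⊆ closedBall 0 (7 / 4 * ρ) := by
    apply closure_minimal _ isClosed_closedBall
    intro x hx
    have hx' : ρ⁻¹ • x ∈ Function.support b := hx
    rw [b.support_eq, mem_ball_zero_iff, norm_smul, norm_inv, Real.norm_of_nonneg hρ.le] at hx'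
    have : ρ⁻¹ * ‖x‖ < 7 / 4 := hx'
    rw [inv_mul_lt_iff₀ hρ] at this
    rw [mem_closedBall_zero_iff]; linarith
  refine ⟨b.contDiff.comp (contDiff_const_smul _), fun x => b.nonneg, fun x => b.le_one, ?_, ?_, ?_,
    ?_⟩
  · intro x hx
    apply b.one_of_mem_closedBall
    rw [mem_closedBall_zero_iff, norm_smul, norm_inv, Real.norm_of_nonneg hρ.le,
      inv_mul_le_iff₀ hρ]
    change ‖x‖ ≤ ρ * (5 / 4)
    linarith
  · exact hs.trans (closedBall_subset_ball (by linarith))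
  · exact (isCompact_closedBall _ _).of_isClosed_subset (isClosed_tsupport _) hs
  · intro k x
    rw [pd_comp_smul, abs_mul, abs_of_pos (inv_pos.mpr hρ), div_eq_inv_mul]
    exact mul_le_mul_of_nonneg_left (hb k _) (inv_pos.mpr hρ).le

/-- A function homogeneous of degree `-m` that is continuous on the unit sphere is `O(|z|^{-m})`. -/
lemma homogeneous_bound (F : E3 → ℝ) (m : ℕ) (hF : ContinuousOn F (sphere 0 1))
    (hom : ∀ t : ℝ, 0 < t → ∀ z, z ≠ 0 → F (t • z) = (t ^ m)⁻¹ * F z) :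
    ∃ C, 0 < C ∧ ∀ z, z ≠ 0 → |F z| * ‖z‖ ^ m ≤ C := by
  obtain ⟨C, hC⟩ := (isCompact_sphere (0 : E3) 1).exists_bound_of_continuousOn hF
  refine ⟨max C 1, by positivity, fun z hz => ?_⟩
  have hn : 0 < ‖z‖ := norm_pos_iff.mpr hz
  have h1 : ‖z‖⁻¹ • z ∈ sphere (0 : E3) 1 := by
    rw [mem_sphere_zero_iff_norm, norm_smul, norm_inv, norm_norm, inv_mul_cancel₀ hn.ne']
  have h2 := hom ‖z‖⁻¹ (inv_pos.mpr hn) z hz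
  have h3 := hC _ h1
  rw [h2, Real.norm_eq_abs, abs_mul, abs_of_pos (by positivity)] at h3
  rw [inv_pow, inv_inv, mul_comm] at h3
  exact h3.trans (le_max_left _ _)

lemma Phi_contDiffAt (α : ℝ) (i j : Fin 3) {z : E3} (hz : z ≠ 0) :
    ContDiffAt ℝ (⊤ : ℕ∞) (fun z => Phi α z i j) z := by
  have hn : ContDiffAt ℝ (⊤ : ℕ∞) (fun z : E3 => ‖z‖) z := contDiffAt_norm ℝ hz
  have hn0 : ‖z‖ ≠ 0 := norm_ne_zero_iff.mpr hz
  have hp : ∀ i : Fin 3, ContDiffAt ℝ (⊤ : ℕ∞) (fun z : E3 => z i) z := by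
    intro i; fun_prop
  unfold Phi
  refine (contDiffAt_const.mul (hn.inv hn0)).mul (contDiffAt_const.add ?_)
  exact (contDiffAt_const.mul ((hp i).mul (hp j))).div (hn.pow 2) (pow_ne_zero _ hn0)

lemma Phi_hom (α : ℝ) (i j : Fin 3) {t : ℝ} (ht : 0 < t) (z : E3) :
    Phi α (t • z) i j = t⁻¹ * Phi α z i j := by
  unfold Phi
  have ht' := ht.ne'
  rw [norm_smul, Real.norm_of_nonneg ht.le, mul_inv]
  have : α / (α + 2) * ((t • z) i * (t • z) j) / (t * ‖z‖) ^ 2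
      = α / (α + 2) * (z i * z j) / ‖z‖ ^ 2 := by
    simp only [PiLp.smul_apply, smul_eq_mul]
    rw [mul_pow, show α / (α + 2) * (t * z i * (t * z j)) = t ^ 2 * (α / (α + 2) * (z i * z j)) by
      ring, mul_div_mul_left _ _ (pow_ne_zero 2 ht')]
  rw [this]; ring

lemma Phi_bound (α : ℝ) : ∃ C, 0 < C ∧ ∀ i j z, z ≠ 0 →
    |Phi α z i j| * ‖z‖ ≤ C ∧ ∀ k, |pd k (fun z => Phi α z i j) z| * ‖z‖ ^ 2 ≤ C := by
  have hne : ∀ z ∈ sphere (0 : E3) 1, z ≠ 0 := fun z hz => ne_zero_of_mem_unit_sphere ⟨z, hz⟩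
  have h1 : ∀ p : Fin 3 × Fin 3, ∃ C, 0 < C ∧ ∀ z : E3, z ≠ 0 → |Phi α z p.1 p.2| * ‖z‖ ≤ C := by
    intro p
    have := homogeneous_bound (fun z => Phi α z p.1 p.2) 1
      (fun z hz => (Phi_contDiffAt α _ _ (hne z hz)).continuousAt.continuousWithinAt)
      (fun t ht z _ => by rw [pow_one]; exact Phi_hom α _ _ ht z)
    simpa using this
  have h2 : ∀ p : Fin 3 × Fin 3 × Fin 3, ∃ C, 0 < C ∧ ∀ z : E3, z ≠ 0 →
      |pd p.2.2 (fun z => Phi α z p.1 p.2.1) z| * ‖z‖ ^ 2 ≤ C := by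
    intro p
    apply homogeneous_bound
    · exact fun z hz => (contDiffAt_pd (Phi_contDiffAt α _ _ (hne z hz)) _).continuousAt.continuousWithinAt
    · intro t ht z hz
      have e := pd_comp_smul (fun z => Phi α z p.1 p.2.1) t p.2.2 z
      simp only [Phi_hom α _ _ ht] at e
      have e2 : pd p.2.2 (fun z => t⁻¹ * Phi α z p.1 p.2.1) z
          = t⁻¹ * pd p.2.2 (fun z => Phi α z p.1 p.2.1) z := by
        rw [pd_mul (differentiableAt_const _) (diffAt_of_contDiffAt (Phi_contDiffAt α _ _ hz)),
          pd_const]; ring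
      rw [e2] at e
      field_simp
      field_simp at e
      linarith
  obtain ⟨C1, hC1, H1⟩ := exists_bound_fin _ h1
  obtain ⟨C2, hC2, H2⟩ := exists_bound_fin _ h2
  refine ⟨C1 + C2, by positivity, fun i j z hz => ⟨?_, fun k => ?_⟩⟩
  · linarith [H1 (i, j) z hz]
  · linarith [H2 (i, j, k) z hz]

/-! ### Pointwise estimates for the bilinear form -/

/-- `|v(x)|²`. -/
def vsq (v : E3 → Fin 3 → ℝ) (x : E3) : ℝ := ∑ i, (v x i) ^ 2

/-- `|Dv(x)|²`. -/
def gsq (v : E3 → Fin 3 → ℝ) (x : E3) : ℝ := ∑ i, ∑ k, (pd k (fun z => v z i) x) ^ 2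

lemma vsq_nonneg (v : E3 → Fin 3 → ℝ) (x : E3) : 0 ≤ vsq v x :=
  Finset.sum_nonneg fun _ _ => sq_nonneg _

lemma gsq_nonneg (v : E3 → Fin 3 → ℝ) (x : E3) : 0 ≤ gsq v x :=
  Finset.sum_nonneg fun _ _ => Finset.sum_nonneg fun _ _ => sq_nonneg _

lemma comp_le_vsq (v : E3 → Fin 3 → ℝ) (x : E3) (i : Fin 3) : (v x i) ^ 2 ≤ vsq v x :=
  Finset.single_le_sum (f := fun i => (v x i) ^ 2) (fun _ _ => sq_nonneg _) (Finset.mem_univ i)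

lemma pd_le_gsq (v : E3 → Fin 3 → ℝ) (x : E3) (i k : Fin 3) :
    (pd k (fun z => v z i) x) ^ 2 ≤ gsq v x :=
  (Finset.single_le_sum (f := fun k => (pd k (fun z => v z i) x) ^ 2) (fun _ _ => sq_nonneg _)
    (Finset.mem_univ k)).trans
  (Finset.single_le_sum (f := fun i => ∑ k, (pd k (fun z => v z i) x) ^ 2)
    (fun _ _ => Finset.sum_nonneg fun _ _ => sq_nonneg _) (Finset.mem_univ i))

lemma sum3_abs_le {a : Fin 3 → ℝ} {B : ℝ} (h : ∀ i, |a i| ≤ B) : |∑ i, a i| ≤ 3 * B := by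
  refine (Finset.abs_sum_le_sum_abs _ _).trans ?_
  refine (Finset.sum_le_sum fun i _ => h i).trans ?_
  simp

/-- Size of the commutator terms of the Lamé form, in terms of bounds for
`w`, `Dw`, `h`, `Dh` and for the gradient `d` of the cutoff. -/
lemma comm_abs {α D W P H Q : ℝ} {w h d : Fin 3 → ℝ} {p q : Fin 3 → Fin 3 → ℝ}
    (hD : ∀ k, |d k| ≤ D) (hW : ∀ k, |w k| ≤ W) (hP : ∀ i k, |p i k| ≤ P) (hH : ∀ i, |h i| ≤ H)
    (hQ : ∀ i k, |q i k| ≤ Q) :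
    (∑ i, ∑ k, (d k * w i * q i k - p i k * (d k * h i))) +
      α * ((∑ k, d k * w k) * (∑ k, q k k) - (∑ k, p k k) * (∑ k, d k * h k)) ≤
      9 * (1 + |α|) * (D * W * Q + P * (D * H)) := by
  have D0 : 0 ≤ D := (abs_nonneg _).trans (hD 0)
  have W0 : 0 ≤ W := (abs_nonneg _).trans (hW 0)
  have P0 : 0 ≤ P := (abs_nonneg _).trans (hP 0 0)
  have H0 : 0 ≤ H := (abs_nonneg _).trans (hH 0)
  have Q0 : 0 ≤ Q := (abs_nonneg _).trans (hQ 0 0)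
  have m : ∀ {a b A B : ℝ}, |a| ≤ A → |b| ≤ B → |a * b| ≤ A * B := by
    intro a b A B ha hb
    rw [abs_mul]
    exact mul_le_mul ha hb (abs_nonneg _) ((abs_nonneg _).trans ha)
  have s : ∀ {a b A B : ℝ}, |a| ≤ A → |b| ≤ B → |a - b| ≤ A + B := by
    intro a b A B ha hb
    exact (abs_sub _ _).trans (add_le_add ha hb)
  have h1 : |∑ i, ∑ k, (d k * w i * q i k - p i k * (d k * h i))| ≤
      3 * (3 * (D * W * Q + P * (D * H))) :=
    sum3_abs_le fun i => sum3_abs_le fun k =>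
      s (m (m (hD k) (hW i)) (hQ i k)) (m (hP i k) (m (hD k) (hH i)))
  have h2 : |(∑ k, d k * w k) * (∑ k, q k k) - (∑ k, p k k) * (∑ k, d k * h k)| ≤
      (3 * (D * W)) * (3 * Q) + (3 * P) * (3 * (D * H)) :=
    s (m (sum3_abs_le fun k => m (hD k) (hW k)) (sum3_abs_le fun k => hQ k k))
      (m (sum3_abs_le fun k => hP k k) (sum3_abs_le fun k => m (hD k) (hH k)))
  have h3 := m (le_refl |α|) h2
  have h4 := (le_abs_self _).trans h1
  have h5 := (le_abs_self _).trans h3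
  linarith

/-- Young's inequality for the Lamé form. -/
lemma aform_young (α : ℝ) (v g : E3 → Fin 3 → ℝ) (x : E3) {t : ℝ} (ht : 0 < t) :
    aform α v g x ≤ (1 + 3 * |α|) * (t * gsq g x + t⁻¹ * gsq v x) := by
  have y : ∀ a b : ℝ, a * b ≤ t * b ^ 2 + t⁻¹ * a ^ 2 := by
    intro a b
    have h1 : t * b ^ 2 + t⁻¹ * a ^ 2 - a * b = t⁻¹ * ((t * b - a / 2) ^ 2 + 3 / 4 * a ^ 2) := by
      field_simp; ring
    have : 0 ≤ t⁻¹ * ((t * b - a / 2) ^ 2 + 3 / 4 * a ^ 2) := by positivity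
    linarith
  have h1 : ∑ i, ∑ k, pd k (fun z => v z i) x * pd k (fun z => g z i) x ≤
      t * gsq g x + t⁻¹ * gsq v x := by
    unfold gsq
    rw [Finset.mul_sum, Finset.mul_sum, ← Finset.sum_add_distrib]
    refine Finset.sum_le_sum fun i _ => ?_
    rw [Finset.mul_sum, Finset.mul_sum, ← Finset.sum_add_distrib]
    exact Finset.sum_le_sum fun k _ => y _ _
  have hd : ∀ v : E3 → Fin 3 → ℝ, (divg v x) ^ 2 ≤ 3 * gsq v x := by
    intro v
    have := pd_le_gsq v x
    simp only [divg, gsq, Fin.sum_univ_three]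
    set a := pd 0 (fun y => v y 0) x
    set b := pd 1 (fun y => v y 1) x
    set c := pd 2 (fun y => v y 2) x
    nlinarith [sq_nonneg (a - b), sq_nonneg (b - c), sq_nonneg (a - c),
      sq_nonneg (pd 1 (fun z => v z 0) x), sq_nonneg (pd 2 (fun z => v z 0) x),
      sq_nonneg (pd 0 (fun z => v z 1) x), sq_nonneg (pd 2 (fun z => v z 1) x),
      sq_nonneg (pd 0 (fun z => v z 2) x), sq_nonneg (pd 1 (fun z => v z 2) x)]
  have h2 : α * (divg v x * divg g x) ≤ |α| * (t * (3 * gsq g x) + t⁻¹ * (3 * gsq v x)) := by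
    refine (le_abs_self _).trans ?_
    rw [abs_mul]
    refine mul_le_mul_of_nonneg_left ?_ (abs_nonneg _)
    rw [abs_mul]
    refine (y _ _).trans ?_
    rw [sq_abs, sq_abs]
    have := hd v
    have := hd g
    gcongr
  unfold aform
  linarith

/-- Multiplication by a matrix `T` with `|T|, |DT| ≤ B` at `x`. -/
lemma gsq_matrix {T : Fin 3 → Fin 3 → E3 → ℝ} {w : E3 → Fin 3 → ℝ} {x : E3} {B : ℝ}
    (hT : ∀ i j, DifferentiableAt ℝ (T i j) x) (hw : ∀ j, DifferentiableAt ℝ (fun z => w z j) x)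
    (hB : ∀ i j, |T i j x| ≤ B) (hB' : ∀ i j k, |pd k (T i j) x| ≤ B) :
    gsq (fun z i => ∑ j, T i j z * w z j) x ≤ 162 * B ^ 2 * (vsq w x + gsq w x) := by
  have B0 : 0 ≤ B := (abs_nonneg _).trans (hB 0 0)
  set W := √(vsq w x)
  set P := √(gsq w x)
  have hW2 : W ^ 2 = vsq w x := Real.sq_sqrt (vsq_nonneg _ _)
  have hP2 : P ^ 2 = gsq w x := Real.sq_sqrt (gsq_nonneg _ _)
  have hW : ∀ j, |w x j| ≤ W := fun j => Real.abs_le_sqrt (comp_le_vsq w x j)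
  have hP : ∀ i k, |pd k (fun z => w z i) x| ≤ P := fun i k => Real.abs_le_sqrt (pd_le_gsq w x i k)
  have key : ∀ i k, (pd k (fun z => ∑ j, T i j z * w z j) x) ^ 2 ≤ 18 * B ^ 2 * (vsq w x + gsq w x) := by
    intro i k
    rw [pd_sum fun j => (hT i j).fun_mul (hw j)]
    have h1 : |∑ j, pd k (fun z => T i j z * w z j) x| ≤ 3 * (B * W + B * P) := by
      apply sum3_abs_le
      intro j
      rw [pd_mul (hT i j) (hw j)]
      refine (abs_add_le _ _).trans ?_
      rw [abs_mul, abs_mul]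
      exact add_le_add (mul_le_mul (hB' i j k) (hW j) (abs_nonneg _) B0)
        (mul_le_mul (hB i j) (hP j k) (abs_nonneg _) B0)
    have h2 := sq_le_sq' (neg_le_of_abs_le h1) ((le_abs_self _).trans h1)
    refine h2.trans ?_
    rw [← hW2, ← hP2]
    nlinarith [mul_nonneg (sq_nonneg B) (sq_nonneg (W - P))]
  unfold gsq at key ⊢
  refine (Finset.sum_le_sum fun i _ => Finset.sum_le_sum fun k _ => key i k).trans ?_
  simp only [Finset.sum_const, Finset.card_univ, Fintype.card_fin, nsmul_eq_mul]
  apply le_of_eq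
  push_cast
  ring

lemma lame_congr {α : ℝ} {u v : E3 → Fin 3 → ℝ} {x : E3} (h : u =ᶠ[nhds x] v) (i : Fin 3) :
    lame α u x i = lame α v x i := by
  have hc : ∀ᶠ z in nhds x, u =ᶠ[nhds z] v := h.eventually_nhds
  have hcomp : ∀ {z}, u =ᶠ[nhds z] v → ∀ i, (fun y => u y i) =ᶠ[nhds z] (fun y => v y i) := by
    intro z hz i
    filter_upwards [hz] with y hy
    rw [hy]
  have h1 : ∀ k, pd k (pd k (fun y => u y i)) x = pd k (pd k (fun y => v y i)) x := by
    intro k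
    apply pd_congr
    filter_upwards [hc] with z hz
    exact pd_congr (hcomp hz i) k
  have h2 : pd i (divg u) x = pd i (divg v) x := by
    apply pd_congr
    filter_upwards [hc] with z hz
    exact Finset.sum_congr rfl fun k _ => pd_congr (hcomp hz k) k
  simp only [lame, lap, h1, h2]

/-- Algebraic form of the commutator of the Lamé form with multiplication by `η`. -/
lemma comm_formula {α : ℝ} {η : E3 → ℝ} {w h : E3 → Fin 3 → ℝ} {x : E3}
    (hη : DifferentiableAt ℝ η x) (hw : ∀ j, DifferentiableAt ℝ (fun z => w z j) x)
    (hh : ∀ j, DifferentiableAt ℝ (fun z => h z j) x) :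
    aform α (fun z i => η z * w z i) h x - aform α w (fun z i => η z * h z i) x =
    (∑ i, ∑ k, (pd k η x * w x i * pd k (fun z => h z i) x
      - pd k (fun z => w z i) x * (pd k η x * h x i))) +
      α * ((∑ k, pd k η x * w x k) * (∑ k, pd k (fun z => h z k) x)
        - (∑ k, pd k (fun z => w z k) x) * (∑ k, pd k η x * h x k)) := by
  simp only [aform, divg, pd_mul hη (hw _), pd_mul hη (hh _), Fin.sum_univ_three]
  ring

/-- On the support of `Dη` the kernel is of size `1/ρ` and its gradient of size `1/ρ²`, which
bounds the commutator by `ρ⁻³ |w|² + ρ⁻¹ |Dw|²`. -/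
lemma comm_pointwise (α : ℝ) {C₁ : ℝ} (hC₁ : 0 < C₁) : ∃ C, 0 < C ∧ ∀ ρ, 0 < ρ → ∀ η,
    IsCutoff C₁ ρ η → ∀ y : E3, ‖y‖ < ρ / 2 → ∀ Ψ : Fin 3 → Fin 3 → E3 → ℝ,
    (∀ i j, Differentiable ℝ (Ψ i j)) → (∀ i j x, ρ < ‖x‖ → Ψ i j x = Phi α (x - y) i j) →
    ∀ w : E3 → Fin 3 → ℝ, (∀ j, Differentiable ℝ (fun z => w z j)) → ∀ x,
    aform α (fun z i => η z * w z i) (fun z i => ∑ j, Ψ i j z * (η z * w z j)) x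
      - aform α w (fun z i => η z * ∑ j, Ψ i j z * (η z * w z j)) x ≤
      (ball (0 : E3) (2 * ρ)).indicator (fun x => C * ((ρ ^ 3)⁻¹ * vsq w x + ρ⁻¹ * gsq w x)) x := by
  obtain ⟨C₂, hC₂, hΦ⟩ := Phi_bound α
  set K := 9 * (1 + |α|) * (C₁ * (12 * C₂ + 6 * C₂ * C₁ + 12 * C₂)) with hK
  have hK0 : 0 < K := by positivity
  refine ⟨2 * K, by positivity, fun ρ hρ η hη y hy Ψ hΨd hΨ w hw x => ?_⟩
  have hηd : Differentiable ℝ η := fun x => diffAt_of_contDiffAt hη.smooth.contDiffAt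
  have hhd : ∀ i, Differentiable ℝ (fun z => ∑ j, Ψ i j z * (η z * w z j)) := fun i =>
    Differentiable.fun_sum fun j _ => (hΨd i j).mul (hηd.mul (hw j))
  rw [comm_formula (hηd x) (fun j => hw j x) (fun j => hhd j x)]
  by_cases hz : (∀ k, pd k η x = 0)
  · simp only [hz, zero_mul, mul_zero, sub_zero, Finset.sum_const_zero, add_zero]
    apply Set.indicator_nonneg
    intro x _
    have := vsq_nonneg w x
    have := gsq_nonneg w x
    positivity
  have hx2 : x ∈ tsupport η := by
    by_contra h
    exact hz fun k => pd_eq_zero h k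
  have hx2' := hη.supp hx2
  have hx1 : 5 / 4 * ρ ≤ ‖x‖ := by
    by_contra! h
    apply hz
    intro k
    have : η =ᶠ[nhds x] fun _ => 1 := by
      have ho : IsOpen {z : E3 | ‖z‖ < 5 / 4 * ρ} := isOpen_lt continuous_norm continuous_const
      filter_upwards [ho.mem_nhds h] with z hz
      exact hη.one z hz
    rw [pd_congr this, pd_const]
  rw [Set.indicator_of_mem hx2']
  have hxy : ρ / 2 ≤ ‖x - y‖ := by
    have := norm_sub_norm_le x y
    linarith
  have hxy0 : x - y ≠ 0 := by
    intro h; rw [h, norm_zero] at hxy; linarith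
  set W := √(vsq w x)
  set P := √(gsq w x)
  have W0 : 0 ≤ W := Real.sqrt_nonneg _
  have P0 : 0 ≤ P := Real.sqrt_nonneg _
  have hW2 : W ^ 2 = vsq w x := Real.sq_sqrt (vsq_nonneg _ _)
  have hP2 : P ^ 2 = gsq w x := Real.sq_sqrt (gsq_nonneg _ _)
  have hW : ∀ j, |w x j| ≤ W := fun j => Real.abs_le_sqrt (comp_le_vsq w x j)
  have hP : ∀ i k, |pd k (fun z => w z i) x| ≤ P := fun i k => Real.abs_le_sqrt (pd_le_gsq w x i k)
  have hηx : |η x| ≤ 1 := by rw [abs_of_nonneg (hη.nonneg x)]; exact hη.le_one x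
  set r := ρ⁻¹ with hr
  have r0 : 0 < r := inv_pos.mpr hρ
  have hD : ∀ k, |pd k η x| ≤ C₁ * r := fun k => by
    have := hη.pd_le k x
    rwa [div_eq_mul_inv] at this
  -- the kernel and its gradient at `x`
  have hrxy : 1 ≤ 2 * r * ‖x - y‖ := by
    have : 2 * r * (ρ / 2) = 1 := by rw [hr]; field_simp
    nlinarith
  have hΨ0 : ∀ i j, |Ψ i j x| ≤ 2 * C₂ * r := by
    intro i j
    rw [hΨ i j x (by linarith)]
    have h1 := (hΦ i j (x - y) hxy0).1
    have h2 := mul_le_mul_of_nonneg_left hrxy (abs_nonneg (Phi α (x - y) i j))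
    nlinarith
  have hΨ1 : ∀ i j k, |pd k (Ψ i j) x| ≤ 4 * C₂ * r ^ 2 := by
    intro i j k
    have e : Ψ i j =ᶠ[nhds x] fun z => Phi α (z - y) i j := by
      have ho : IsOpen {z : E3 | ρ < ‖z‖} := isOpen_lt continuous_const continuous_norm
      filter_upwards [ho.mem_nhds (show ρ < ‖x‖ by linarith)] with z hz
      exact hΨ i j z hz
    have e2 : pd k (fun z => Phi α (z - y) i j) x = pd k (fun z => Phi α z i j) (x - y) := by
      unfold pd
      rw [fderiv_comp_sub (f := fun z => Phi α z i j)]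
    rw [pd_congr e, e2]
    have h1 := (hΦ i j (x - y) hxy0).2 k
    have h3 : 1 ≤ (2 * r * ‖x - y‖) ^ 2 := one_le_pow₀ hrxy
    have h2 := mul_le_mul_of_nonneg_left h3 (abs_nonneg (pd k (fun z => Phi α z i j) (x - y)))
    have h4 := mul_le_mul_of_nonneg_left h1 (show 0 ≤ 4 * r ^ 2 by positivity)
    nlinarith
  have mm : ∀ {a b A B : ℝ}, |a| ≤ A → |b| ≤ B → |a * b| ≤ A * B := by
    intro a b A B ha hb
    rw [abs_mul]
    exact mul_le_mul ha hb (abs_nonneg _) ((abs_nonneg _).trans ha)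
  have hH : ∀ i, |∑ j, Ψ i j x * (η x * w x j)| ≤ 3 * (2 * C₂ * r * (1 * W)) := fun i =>
    sum3_abs_le fun j => mm (hΨ0 i j) (mm hηx (hW j))
  have hQ : ∀ i k, |pd k (fun z => ∑ j, Ψ i j z * (η z * w z j)) x| ≤
      3 * (4 * C₂ * r ^ 2 * (1 * W) + 2 * C₂ * r * (C₁ * r * W + 1 * P)) := by
    intro i k
    rw [pd_sum fun j => (hΨd i j x).fun_mul ((hηd x).fun_mul (hw j x))]
    apply sum3_abs_le
    intro j
    rw [pd_mul (hΨd i j x) ((hηd x).fun_mul (hw j x)), pd_mul (hηd x) (hw j x)]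
    refine (abs_add_le _ _).trans (add_le_add (mm (hΨ1 i j k) (mm hηx (hW j))) (mm (hΨ0 i j) ?_))
    exact (abs_add_le _ _).trans (add_le_add (mm (hD k) (hW j)) (mm hηx (hP j k)))
  refine (comm_abs hD hW hP hH hQ).trans ?_
  rw [← hW2, ← hP2, ← inv_pow, ← hr]
  have e : 2 * K * (r ^ 3 * W ^ 2 + r * P ^ 2) - 9 * (1 + |α|) * (C₁ * r * W *
      (3 * (4 * C₂ * r ^ 2 * (1 * W) + 2 * C₂ * r * (C₁ * r * W + 1 * P))) +
        P * (C₁ * r * (3 * (2 * C₂ * r * (1 * W))))) =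
      9 * (1 + |α|) * C₁ * r * (2 * (12 * C₂ + 6 * C₂ * C₁ + 12 * C₂) * (r ^ 2 * W ^ 2 + P ^ 2) -
        ((12 * C₂ + 6 * C₂ * C₁) * (r * W) ^ 2 + 12 * C₂ * (r * W * P))) := by
    rw [hK]; ring
  have : 0 ≤ 9 * (1 + |α|) * C₁ * r * (2 * (12 * C₂ + 6 * C₂ * C₁ + 12 * C₂) * (r ^ 2 * W ^ 2 + P ^ 2) -
        ((12 * C₂ + 6 * C₂ * C₁) * (r * W) ^ 2 + 12 * C₂ * (r * W * P))) := by
    apply mul_nonneg (by positivity)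
    have h1 : 0 ≤ C₂ * ((r * W) - P) ^ 2 := by positivity
    have h2 : 0 ≤ C₂ * C₁ * (r * W) ^ 2 := by positivity
    have h3 : 0 ≤ C₂ * C₁ * P ^ 2 := by positivity
    have h4 : 0 ≤ C₂ * (r * W) ^ 2 := by positivity
    have h5 : 0 ≤ C₂ * P ^ 2 := by positivity
    nlinarith
  linarith

/-! ### Upper bound for the weighted energy of a localized approximant -/

lemma IsTestOn.comp {U : Set E3} {w : E3 → Fin 3 → ℝ} (h : IsTestOn U w) (i : Fin 3) :
    ContDiff ℝ (⊤ : ℕ∞) (fun z => w z i) ∧ HasCompactSupport (fun z => w z i) :=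
  ⟨contDiff_pi.mp h.1 i, h.2.1.of_isClosed_subset (isClosed_tsupport _) (tsupport_comp_sub w i)⟩

lemma continuous_vsq {w : E3 → Fin 3 → ℝ} (h : ContDiff ℝ (⊤ : ℕ∞) w) : Continuous (vsq w) :=
  continuous_finsetSum _ fun i _ => ((contDiff_pi.mp h i).continuous).pow 2

lemma continuous_gsq {w : E3 → Fin 3 → ℝ} (h : ContDiff ℝ (⊤ : ℕ∞) w) : Continuous (gsq w) :=
  continuous_finsetSum _ fun i _ => continuous_finsetSum _ fun k _ =>
    (continuous_pd (contDiff_pi.mp h i) k).pow 2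

lemma vsq_zero {w : E3 → Fin 3 → ℝ} {x : E3} (hx : x ∉ tsupport w) : vsq w x = 0 := by
  simp [vsq, image_eq_zero_of_notMem_tsupport hx]

lemma gsq_zero {w : E3 → Fin 3 → ℝ} {x : E3} (hx : x ∉ tsupport w) : gsq w x = 0 := by
  simp [gsq, pd_eq_zero fun h => hx (tsupport_comp_sub w _ h)]

lemma compact_vsq {w : E3 → Fin 3 → ℝ} (h : HasCompactSupport w) : HasCompactSupport (vsq w) :=
  HasCompactSupport.intro h fun _ hx => vsq_zero hx

lemma compact_gsq {w : E3 → Fin 3 → ℝ} (h : HasCompactSupport w) : HasCompactSupport (gsq w) :=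
  HasCompactSupport.intro h fun _ hx => gsq_zero hx

lemma IsTestOn.int_vsq {U : Set E3} {w : E3 → Fin 3 → ℝ} (h : IsTestOn U w) :
    Integrable (vsq w) :=
  (continuous_vsq h.1).integrable_of_hasCompactSupport (compact_vsq h.2.1)

lemma IsTestOn.int_gsq {U : Set E3} {w : E3 → Fin 3 → ℝ} (h : IsTestOn U w) :
    Integrable (gsq w) :=
  (continuous_gsq h.1).integrable_of_hasCompactSupport (compact_gsq h.2.1)

lemma aform_zero {α : ℝ} {u h : E3 → Fin 3 → ℝ} {x : E3} (hx : x ∉ tsupport h) :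
    aform α u h x = 0 := by
  have : ∀ i k, pd k (fun z => h z i) x = 0 := fun i k =>
    pd_eq_zero (fun hh => hx (tsupport_comp_sub h i hh)) k
  simp [aform, divg, this]

lemma aform_sub {α : ℝ} {u w h : E3 → Fin 3 → ℝ} {x : E3}
    (hu : ∀ i, DifferentiableAt ℝ (fun z => u z i) x)
    (hw : ∀ i, DifferentiableAt ℝ (fun z => w z i) x) :
    aform α w h x - aform α u h x = aform α (fun z i => u z i - w z i) (fun z i => - h z i) x := by
  have hn : ∀ i k, pd k (fun z => - h z i) x = - pd k (fun z => h z i) x := by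
    intro i k; simp [pd, fderiv_fun_neg]
  simp only [aform, divg, pd_sub (hu _) (hw _), hn, Fin.sum_univ_three]
  ring

lemma gsq_neg (h : E3 → Fin 3 → ℝ) (x : E3) : gsq (fun z i => - h z i) x = gsq h x := by
  have hn : ∀ i k, pd k (fun z => - h z i) x = - pd k (fun z => h z i) x := by
    intro i k; simp [pd, fderiv_fun_neg]
  simp [gsq, hn]

/-- If `Lu = 0` in `Ω ∩ B_{2ρ}` and the test field `w` agrees with `u` near `y`, the weighted energy
of `η w` is controlled by `ρ⁻³ |w|² + ρ⁻¹ |Dw|²` on `B_{2ρ}`, up to an error that is small with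
`w - u`. The weight is singular at `y` only, where `L(η w) = Lu = 0`, so it may be replaced by a
smooth one before integrating by parts. -/
lemma energy_upper (α : ℝ) {C₁ : ℝ} (hC₁ : 0 < C₁) : ∃ C, 0 < C ∧
    ∀ (Ω : Set E3) (u : E3 → Fin 3 → ℝ) (ρ : ℝ) (y : E3) (d : ℝ) (η : E3 → ℝ),
    IsOpen Ω → (∀ x ∈ Ω, ContDiffAt ℝ (⊤ : ℕ∞) u x) → 0 < ρ → IsCutoff C₁ ρ η →
    (∀ x ∈ Ω, x ∈ ball (0 : E3) (2 * ρ) → ∀ i, lame α u x i = 0) →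
    ‖y‖ < ρ / 2 → 0 < d → ball y d ⊆ Ω → ball y d ⊆ ball (0 : E3) ρ →
    ∃ B, 0 < B ∧ ∀ w, IsTestOn Ω w → (∀ x ∈ ball y d, w x = u x) →
      IntegrableOn (gsq fun z i => u z i - w z i) Ω → ∀ t, 0 < t →
      lameEnergy α (fun z i => η z * w z i) y ≤
        C * (∫ x in Ω ∩ ball (0 : E3) (2 * ρ), ((ρ ^ 3)⁻¹ * vsq w x + ρ⁻¹ * gsq w x)) +
        B * t * (∫ x in Ω, (vsq w x + gsq w x)) +
        B * t⁻¹ * ∫ x in Ω, gsq (fun z i => u z i - w z i) x := by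
  obtain ⟨C, hC, hcomm⟩ := comm_pointwise α hC₁
  refine ⟨C, hC, fun Ω u ρ y d η hΩ hu hρ hη hL hy hd hdΩ hdρ => ?_⟩
  -- the desingularized kernel
  let χ : ContDiffBump y := ⟨d / 4, d / 2, by linarith, by linarith⟩
  let Ψ : Fin 3 → Fin 3 → E3 → ℝ := fun i j x => (1 - χ x) * Phi α (x - y) i j
  have hχ0 : ∀ x, x ∉ ball y d → χ x = 0 := by
    intro x hx
    apply χ.zero_of_le_dist
    rw [mem_ball, not_lt] at hx
    change d / 2 ≤ dist x y
    linarith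
  have hΨs : ∀ i j, ContDiff ℝ (⊤ : ℕ∞) (Ψ i j) := by
    intro i j
    rw [contDiff_iff_contDiffAt]
    intro x
    by_cases hx : x = y
    · have : Ψ i j =ᶠ[nhds x] fun _ => 0 := by
        rw [hx]
        filter_upwards [χ.eventuallyEq_one] with z hz
        simp [Ψ, hz]
      exact contDiffAt_const.congr_of_eventuallyEq this
    · have h1 : ContDiffAt ℝ (⊤ : ℕ∞) (fun x => Phi α (x - y) i j) x :=
        (Phi_contDiffAt α i j (sub_ne_zero.mpr hx)).comp (f := fun x => x - y) x (by fun_prop)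
      exact (contDiffAt_const.sub χ.contDiff.contDiffAt).mul h1
  have hΨd : ∀ i j, Differentiable ℝ (Ψ i j) := fun i j x =>
    diffAt_of_contDiffAt (hΨs i j).contDiffAt
  have hΨΦ : ∀ i j x, x ∉ ball y d → Ψ i j x = Phi α (x - y) i j := by
    intro i j x hx
    simp [Ψ, hχ0 x hx]
  have hηd : Differentiable ℝ η := fun x => diffAt_of_contDiffAt hη.smooth.contDiffAt
  -- the matrix `η² Ψ` is bounded together with its gradient
  let T : Fin 3 → Fin 3 → E3 → ℝ := fun i j x => η x * (Ψ i j x * η x)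
  have hTs : ∀ i j, ContDiff ℝ (⊤ : ℕ∞) (T i j) := fun i j =>
    hη.smooth.mul ((hΨs i j).mul hη.smooth)
  have hTc : ∀ i j, HasCompactSupport (T i j) := fun i j => hη.compact.mul_right
  obtain ⟨B₀, hB₀, hB₀'⟩ := exists_bound_fin (P := fun _ : E3 => True)
    (fun (p : Fin 3 × Fin 3) x => |T p.1 p.2 x|)
    (fun p => (bounded_of_compactSupport (hTs p.1 p.2).continuous (hTc p.1 p.2)).imp
      fun C h => ⟨h.1, fun x _ => h.2 x⟩)
  obtain ⟨B₁, hB₁, hB₁'⟩ := exists_bound_fin (P := fun _ : Fin 3 × E3 => True)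
    (fun (p : Fin 3 × Fin 3) x => |pd x.1 (T p.1 p.2) x.2|)
    (fun p => (bounded_pd (hTs p.1 p.2) (hTc p.1 p.2)).imp
      fun C h => ⟨h.1, fun x _ => h.2 x.1 x.2⟩)
  set A := 1 + 3 * |α| with hA
  have hA0 : 1 ≤ A := by have := abs_nonneg α; linarith
  set B₂ := 162 * (B₀ + B₁) ^ 2 with hB₂
  have hB₂0 : 0 < B₂ := by positivity
  refine ⟨A * B₂ + A, by positivity, fun w hw hwu hdiff t ht => ?_⟩
  have hwd : ∀ j, Differentiable ℝ (fun z => w z j) := fun j x =>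
    diffAt_of_contDiffAt (hw.comp j).1.contDiffAt
  let h : E3 → Fin 3 → ℝ := fun z i => ∑ j, Ψ i j z * (η z * w z j)
  let g : E3 → Fin 3 → ℝ := fun z i => η z * h z i
  have hw0 : ∀ x, x ∉ tsupport w → w x = 0 := fun x hx => image_eq_zero_of_notMem_tsupport hx
  have hhsub : tsupport h ⊆ tsupport w := by
    apply closure_minimal _ (isClosed_tsupport _)
    intro x hx
    by_contra hx'
    apply hx
    funext i
    simp [h, hw0 x hx']
  have hgsub : tsupport g ⊆ tsupport w := by
    apply closure_minimal _ (isClosed_tsupport _)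
    intro x hx
    by_contra hx'
    apply hx
    funext i
    simp [g, h, hw0 x hx']
  have hhs : ContDiff ℝ (⊤ : ℕ∞) h := contDiff_pi.mpr fun i => ContDiff.sum fun j _ =>
    (hΨs i j).mul (hη.smooth.mul (hw.comp j).1)
  have hgs : ContDiff ℝ (⊤ : ℕ∞) g := contDiff_pi.mpr fun i =>
    hη.smooth.mul (contDiff_pi.mp hhs i)
  have hh : IsTestOn Set.univ h :=
    ⟨hhs, hw.2.1.of_isClosed_subset (isClosed_tsupport _) hhsub, Set.subset_univ _⟩
  have hg : IsTestOn Ω g :=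
    ⟨hgs, hw.2.1.of_isClosed_subset (isClosed_tsupport _) hgsub, hgsub.trans hw.2.2⟩
  have hηw : ContDiff ℝ (⊤ : ℕ∞) (fun z i => η z * w z i) := contDiff_pi.mpr fun i =>
    hη.smooth.mul (hw.comp i).1
  obtain ⟨int1, G1⟩ := green (α := α) (u := fun z i => η z * w z i)
    (fun x _ => hηw.contDiffAt) hh
  obtain ⟨int2, G2⟩ := green (α := α) hu hg
  have E1 : lameEnergy α (fun z i => η z * w z i) y = ∫ x, aform α (fun z i => η z * w z i) h x := by
    rw [← G1]
    unfold lameEnergy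
    congr 1
    funext x
    by_cases hx : x ∈ ball y d
    · have e : (fun z i => η z * w z i) =ᶠ[nhds x] u := by
        filter_upwards [isOpen_ball.mem_nhds hx] with z hz
        funext i
        have hz' := mem_ball_zero_iff.mp (hdρ hz)
        rw [hη.one z (by linarith), hwu z hz, one_mul]
      have hx' := mem_ball_zero_iff.mp (hdρ hx)
      have : ∀ i, lame α (fun z i => η z * w z i) x i = 0 := fun i => by
        rw [lame_congr e]
        exact hL x (hdΩ hx) (mem_ball_zero_iff.mpr (by linarith)) i
      simp [this]
    · simp only [h, hΨΦ _ _ x hx, Finset.mul_sum, mul_assoc]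
  have E2 : ∫ x, aform α u g x = 0 := by
    rw [← G2]
    have : (fun x => ∑ i, lame α u x i * g x i) = fun _ => 0 := by
      funext x
      by_cases hx : x ∈ Ω ∧ x ∈ ball (0 : E3) (2 * ρ)
      · simp [hL x hx.1 hx.2]
      · have : g x = 0 := by
          by_cases hxΩ : x ∈ Ω
          · have : η x = 0 := image_eq_zero_of_notMem_tsupport fun hh => hx ⟨hxΩ, hη.supp hh⟩
            funext i
            simp [g, this]
          · exact image_eq_zero_of_notMem_tsupport fun hh => hxΩ (hg.2.2 hh)
        simp [this]
    rw [this, integral_zero]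
  have E3' : lameEnergy α (fun z i => η z * w z i) y =
      ∫ x in Ω, (aform α (fun z i => η z * w z i) h x - aform α u g x) := by
    rw [setIntegral_eq_integral_of_forall_compl_eq_zero, integral_sub int1 int2, E2, E1, sub_zero]
    intro x hx
    rw [aform_zero fun hh => hx (hw.2.2 (hhsub hh)), aform_zero fun hh => hx (hg.2.2 hh), sub_zero]
  rw [E3']
  have hgT : g = fun z i => ∑ j, T i j z * w z j := by
    funext z i
    simp only [g, h, T, Finset.mul_sum]
    exact Finset.sum_congr rfl fun j _ => by ring
  have iv := hw.int_vsq
  have ig := hw.int_gsq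
  have J1 : Integrable fun x => (ρ ^ 3)⁻¹ * vsq w x + ρ⁻¹ * gsq w x :=
    (iv.const_mul _).add (ig.const_mul _)
  have J1' : Integrable ((ball (0 : E3) (2 * ρ)).indicator
      fun x => C * ((ρ ^ 3)⁻¹ * vsq w x + ρ⁻¹ * gsq w x)) :=
    (J1.const_mul C).indicator measurableSet_ball
  have J2 : Integrable fun x => vsq w x + gsq w x := iv.add ig
  have key : ∀ x ∈ Ω, aform α (fun z i => η z * w z i) h x - aform α u g x ≤
      (ball (0 : E3) (2 * ρ)).indicator (fun x => C * ((ρ ^ 3)⁻¹ * vsq w x + ρ⁻¹ * gsq w x)) x +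
      (A * B₂ + A) * t * (vsq w x + gsq w x) +
      (A * B₂ + A) * t⁻¹ * gsq (fun z i => u z i - w z i) x := by
    intro x hx
    have k1 := hcomm ρ hρ η hη y hy Ψ hΨd
      (fun i j x hx => hΨΦ i j x fun hh => by
        have := mem_ball_zero_iff.mp (hdρ hh); linarith) w hwd x
    have k2 : aform α w g x - aform α u g x ≤
        (1 + 3 * |α|) * (t * gsq g x + t⁻¹ * gsq (fun z i => u z i - w z i) x) := by
      rw [aform_sub (fun i => diffAt_of_contDiffAt (contDiffAt_comp (hu x hx) i)) fun i => hwd i x,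
        ← gsq_neg g]
      exact aform_young _ _ _ _ ht
    have k3 : gsq g x ≤ B₂ * (vsq w x + gsq w x) := by
      rw [hgT]
      apply gsq_matrix (fun i j => diffAt_of_contDiffAt (hTs i j).contDiffAt) (fun j => hwd j x)
      · intro i j
        have := hB₀' (i, j) x trivial
        simp only at this
        linarith
      · intro i j k
        have := hB₁' (i, j) (k, x) trivial
        simp only at this
        linarith
    have k4 : A * (t * gsq g x) ≤ A * (t * (B₂ * (vsq w x + gsq w x))) := by gcongr
    have k5 : 0 ≤ A * t * (vsq w x + gsq w x) := by
      have := vsq_nonneg w x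
      have := gsq_nonneg w x
      positivity
    have k6 : 0 ≤ A * B₂ * t⁻¹ * gsq (fun z i => u z i - w z i) x := by
      have := gsq_nonneg (fun z i => u z i - w z i) x
      positivity
    rw [← hA] at k2
    change aform α (fun z i => η z * w z i) h x - aform α w g x ≤ _ at k1
    linarith
  have JJ : IntegrableOn (fun x => (ball (0 : E3) (2 * ρ)).indicator
      (fun x => C * ((ρ ^ 3)⁻¹ * vsq w x + ρ⁻¹ * gsq w x)) x +
      (A * B₂ + A) * t * (vsq w x + gsq w x)) Ω :=
    (J1'.add (J2.const_mul _)).integrableOn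
  refine (setIntegral_mono_on ((int1.sub int2).integrableOn)
    (JJ.add (hdiff.const_mul _)) hΩ.measurableSet key).trans (le_of_eq ?_)
  have e1 := integral_add JJ (hdiff.const_mul ((A * B₂ + A) * t⁻¹))
  have e2 := integral_add (J1'.integrableOn (s := Ω))
    ((J2.const_mul ((A * B₂ + A) * t)).integrableOn (s := Ω))
  refine e1.trans ?_
  rw [e2, integral_const_mul, integral_const_mul, setIntegral_indicator measurableSet_ball,
    integral_const_mul]

/-! ### Approximation in the energy norm -/

lemma vsq_le_left (u w : E3 → Fin 3 → ℝ) (x : E3) :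
    vsq u x ≤ 2 * vsq w x + 2 * vsq (fun z i => u z i - w z i) x := by
  simp only [vsq, Fin.sum_univ_three]
  nlinarith [sq_nonneg (w x 0 - (u x 0 - w x 0)), sq_nonneg (w x 1 - (u x 1 - w x 1)),
    sq_nonneg (w x 2 - (u x 2 - w x 2))]

lemma vsq_le_right (u w : E3 → Fin 3 → ℝ) (x : E3) :
    vsq w x ≤ 2 * vsq u x + 2 * vsq (fun z i => u z i - w z i) x := by
  simp only [vsq, Fin.sum_univ_three]
  nlinarith [sq_nonneg (u x 0 + (u x 0 - w x 0)), sq_nonneg (u x 1 + (u x 1 - w x 1)),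
    sq_nonneg (u x 2 + (u x 2 - w x 2))]

lemma vsq_sub_le (u w : E3 → Fin 3 → ℝ) (x : E3) :
    vsq (fun z i => u z i - w z i) x ≤ 2 * vsq u x + 2 * vsq w x := by
  simp only [vsq, Fin.sum_univ_three]
  nlinarith [sq_nonneg (u x 0 + w x 0), sq_nonneg (u x 1 + w x 1), sq_nonneg (u x 2 + w x 2)]

section grad

variable {u w : E3 → Fin 3 → ℝ} {x : E3}

lemma gsq_three_le {a b c : Fin 3 → Fin 3 → ℝ}
    (h : ∀ i k, (a i k) ^ 2 ≤ 2 * (b i k) ^ 2 + 2 * (c i k) ^ 2) :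
    ∑ i, ∑ k, (a i k) ^ 2 ≤ 2 * ∑ i, ∑ k, (b i k) ^ 2 + 2 * ∑ i, ∑ k, (c i k) ^ 2 := by
  rw [Finset.mul_sum, Finset.mul_sum, ← Finset.sum_add_distrib]
  refine Finset.sum_le_sum fun i _ => ?_
  rw [Finset.mul_sum, Finset.mul_sum, ← Finset.sum_add_distrib]
  exact Finset.sum_le_sum fun k _ => h i k

lemma gsq_pd_sub (hu : ContDiffAt ℝ (⊤ : ℕ∞) u x) (hw : ContDiffAt ℝ (⊤ : ℕ∞) w x) (i k : Fin 3) :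
    pd k (fun z => u z i - w z i) x = pd k (fun z => u z i) x - pd k (fun z => w z i) x :=
  pd_sub (diffAt_of_contDiffAt (contDiffAt_comp hu i)) (diffAt_of_contDiffAt (contDiffAt_comp hw i)) k

lemma gsq_le_left (hu : ContDiffAt ℝ (⊤ : ℕ∞) u x) (hw : ContDiffAt ℝ (⊤ : ℕ∞) w x) :
    gsq u x ≤ 2 * gsq w x + 2 * gsq (fun z i => u z i - w z i) x := by
  simp only [gsq]
  apply gsq_three_le
  intro i k
  rw [gsq_pd_sub hu hw]
  nlinarith [sq_nonneg (pd k (fun z => w z i) x - (pd k (fun z => u z i) x - pd k (fun z => w z i) x))]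

lemma gsq_le_right (hu : ContDiffAt ℝ (⊤ : ℕ∞) u x) (hw : ContDiffAt ℝ (⊤ : ℕ∞) w x) :
    gsq w x ≤ 2 * gsq u x + 2 * gsq (fun z i => u z i - w z i) x := by
  simp only [gsq]
  apply gsq_three_le
  intro i k
  rw [gsq_pd_sub hu hw]
  nlinarith [sq_nonneg (pd k (fun z => u z i) x + (pd k (fun z => u z i) x - pd k (fun z => w z i) x))]

lemma gsq_sub_le (hu : ContDiffAt ℝ (⊤ : ℕ∞) u x) (hw : ContDiffAt ℝ (⊤ : ℕ∞) w x) :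
    gsq (fun z i => u z i - w z i) x ≤ 2 * gsq u x + 2 * gsq w x := by
  simp only [gsq]
  apply gsq_three_le
  intro i k
  rw [gsq_pd_sub hu hw]
  nlinarith [sq_nonneg (pd k (fun z => u z i) x + pd k (fun z => w z i) x)]

end grad

lemma contOn_vsq {Ω : Set E3} {v : E3 → Fin 3 → ℝ} (hv : ∀ x ∈ Ω, ContDiffAt ℝ (⊤ : ℕ∞) v x) :
    ContinuousOn (vsq v) Ω := fun x hx =>
  (tendsto_finsetSum _ fun i _ =>
    ((contDiffAt_comp (hv x hx) i).continuousAt.tendsto.pow 2)).mono_left nhdsWithin_le_nhds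

lemma contOn_gsq {Ω : Set E3} {v : E3 → Fin 3 → ℝ} (hv : ∀ x ∈ Ω, ContDiffAt ℝ (⊤ : ℕ∞) v x) :
    ContinuousOn (gsq v) Ω := fun x hx =>
  (tendsto_finsetSum _ fun i _ => tendsto_finsetSum _ fun k _ =>
    ((contDiffAt_pd (contDiffAt_comp (hv x hx) i) k).continuousAt.tendsto.pow 2)).mono_left
      nhdsWithin_le_nhds

lemma integrableOn_of_le {Ω : Set E3} (hΩ : IsOpen Ω) {F G : E3 → ℝ} (hF : ContinuousOn F Ω)
    (hF0 : ∀ x, 0 ≤ F x) (hG : IntegrableOn G Ω) (h : ∀ x ∈ Ω, F x ≤ G x) : IntegrableOn F Ω := by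
  refine Integrable.mono' hG (hF.aestronglyMeasurable hΩ.measurableSet) ?_
  filter_upwards [ae_restrict_mem hΩ.measurableSet] with x hx
  rw [Real.norm_of_nonneg (hF0 x)]
  exact h x hx

lemma MemH10.smooth {Ω : Set E3} (hΩ : IsOpen Ω) {u : E3 → Fin 3 → ℝ} (hu : MemH10 Ω u) :
    ∀ x ∈ Ω, ContDiffAt ℝ (⊤ : ℕ∞) u x := fun x hx => hu.1.contDiffAt (hΩ.mem_nhds hx)

lemma MemH10.int_vsq {Ω : Set E3} (hΩ : IsOpen Ω) {u : E3 → Fin 3 → ℝ} (hu : MemH10 Ω u) :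
    IntegrableOn (vsq u) Ω :=
  integrableOn_of_le hΩ (contOn_vsq (hu.smooth hΩ)) (vsq_nonneg u) hu.2.1 fun x _ => by
    have := gsq_nonneg u x
    unfold gsq at this
    simp only [vsq]; linarith

lemma MemH10.int_gsq {Ω : Set E3} (hΩ : IsOpen Ω) {u : E3 → Fin 3 → ℝ} (hu : MemH10 Ω u) :
    IntegrableOn (gsq u) Ω :=
  integrableOn_of_le hΩ (contOn_gsq (hu.smooth hΩ)) (gsq_nonneg u) hu.2.1 fun x _ => by
    have := vsq_nonneg u x
    unfold vsq at this
    simp only [gsq]; linarith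

/-- `w` is a test field on `Ω` at `H¹(Ω)`-distance (squared) less than `ε` from `u`. -/
structure IsApprox (Ω : Set E3) (u : E3 → Fin 3 → ℝ) (ε : ℝ) (w : E3 → Fin 3 → ℝ) : Prop where
  test : IsTestOn Ω w
  int_v : IntegrableOn (vsq fun z i => u z i - w z i) Ω
  int_g : IntegrableOn (gsq fun z i => u z i - w z i) Ω
  lt : ∫ x in Ω, (vsq (fun z i => u z i - w z i) x + gsq (fun z i => u z i - w z i) x) < ε

lemma IsApprox.lt_v {Ω : Set E3} {u w : E3 → Fin 3 → ℝ} {ε : ℝ} (h : IsApprox Ω u ε w) :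
    ∫ x in Ω, vsq (fun z i => u z i - w z i) x < ε := by
  refine lt_of_le_of_lt (integral_mono h.int_v (h.int_v.add h.int_g) fun x => ?_) h.lt
  have := gsq_nonneg (fun z i => u z i - w z i) x
  simp only [Pi.add_apply]; linarith

lemma IsApprox.lt_g {Ω : Set E3} {u w : E3 → Fin 3 → ℝ} {ε : ℝ} (h : IsApprox Ω u ε w) :
    ∫ x in Ω, gsq (fun z i => u z i - w z i) x < ε := by
  refine lt_of_le_of_lt (integral_mono h.int_g (h.int_v.add h.int_g) fun x => ?_) h.lt
  have := vsq_nonneg (fun z i => u z i - w z i) x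
  simp only [Pi.add_apply]; linarith

lemma contDiffAt_sub' {u w : E3 → Fin 3 → ℝ} {x : E3} (hu : ContDiffAt ℝ (⊤ : ℕ∞) u x)
    (hw : ContDiffAt ℝ (⊤ : ℕ∞) w x) : ContDiffAt ℝ (⊤ : ℕ∞) (fun z i => u z i - w z i) x :=
  contDiffAt_pi.mpr fun i => (contDiffAt_comp hu i).sub (contDiffAt_comp hw i)

lemma int_of_test {Ω : Set E3} (hΩ : IsOpen Ω) {u w : E3 → Fin 3 → ℝ} (hu : MemH10 Ω u)
    (hw : IsTestOn Ω w) : IntegrableOn (vsq fun z i => u z i - w z i) Ω ∧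
    IntegrableOn (gsq fun z i => u z i - w z i) Ω := by
  have hs : ∀ x ∈ Ω, ContDiffAt ℝ (⊤ : ℕ∞) (fun z i => u z i - w z i) x := fun x hx =>
    contDiffAt_sub' (hu.smooth hΩ x hx) hw.1.contDiffAt
  constructor
  · exact integrableOn_of_le hΩ (contOn_vsq hs) (vsq_nonneg _)
      (((hu.int_vsq hΩ).const_mul 2).add (hw.int_vsq.integrableOn.const_mul 2))
      fun x _ => vsq_sub_le u w x
  · exact integrableOn_of_le hΩ (contOn_gsq hs) (gsq_nonneg _)
      (((hu.int_gsq hΩ).const_mul 2).add (hw.int_gsq.integrableOn.const_mul 2))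
      fun x hx => gsq_sub_le (hu.smooth hΩ x hx) hw.1.contDiffAt

lemma MemH10.approx {Ω : Set E3} (hΩ : IsOpen Ω) {u : E3 → Fin 3 → ℝ} (hu : MemH10 Ω u) {ε : ℝ}
    (hε : 0 < ε) : ∃ w, IsApprox Ω u ε w := by
  obtain ⟨un, ht, hlim⟩ := hu.2.2
  obtain ⟨n, hn⟩ := (hlim.eventually (gt_mem_nhds hε)).exists
  obtain ⟨i1, i2⟩ := int_of_test hΩ hu (ht n)
  exact ⟨un n, ht n, i1, i2, hn⟩

/-- The approximating test field may be taken equal to `u` on a fixed ball inside `Ω`. -/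
lemma MemH10.approx_ball {Ω : Set E3} (hΩ : IsOpen Ω) {u : E3 → Fin 3 → ℝ} (hu : MemH10 Ω u)
    {y : E3} {d : ℝ} (hd : 0 < d) (hy : closedBall y (2 * d) ⊆ Ω) {ε : ℝ} (hε : 0 < ε) :
    ∃ w, IsApprox Ω u ε w ∧ ∀ x ∈ ball y d, w x = u x := by
  let χ : ContDiffBump y := ⟨d, 2 * d, hd, by linarith⟩
  have hχs : ContDiff ℝ (⊤ : ℕ∞) χ := χ.contDiff
  obtain ⟨B, hB, hχB⟩ := bounded_pd hχs χ.hasCompactSupport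
  set K := 1 + 162 * (1 + B) ^ 2 with hK
  have hK0 : 0 < K := by positivity
  obtain ⟨v, hv⟩ := hu.approx hΩ (ε := ε / K) (by positivity)
  have hsm := hu.smooth hΩ
  let w : E3 → Fin 3 → ℝ := fun z i => χ z * u z i + (1 - χ z) * v z i
  have hχsupp : tsupport χ ⊆ Ω := by rw [χ.tsupport_eq]; exact hy
  have hχu : ∀ i, ContDiff ℝ (⊤ : ℕ∞) fun z => χ z * u z i := by
    intro i
    rw [contDiff_iff_contDiffAt]
    intro x
    by_cases hx : x ∈ tsupport χ
    · exact hχs.contDiffAt.mul (contDiffAt_comp (hsm x (hχsupp hx)) i)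
    · have : (fun z => χ z * u z i) =ᶠ[nhds x] fun _ => 0 := by
        filter_upwards [notMem_tsupport_iff_eventuallyEq.mp hx] with z hz
        simp [hz]
      exact contDiffAt_const.congr_of_eventuallyEq this
  have hwt : IsTestOn Ω w := by
    have hsub : tsupport w ⊆ tsupport χ ∪ tsupport v := by
      apply closure_minimal _ ((isClosed_tsupport _).union (isClosed_tsupport _))
      intro x hx
      by_contra h
      rw [Set.mem_union, not_or] at h
      apply hx
      funext i
      simp [w, image_eq_zero_of_notMem_tsupport h.1, image_eq_zero_of_notMem_tsupport h.2]
    refine ⟨contDiff_pi.mpr fun i => (hχu i).add ((contDiff_const.sub hχs).mul (hv.test.comp i).1),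
      ?_, hsub.trans (Set.union_subset hχsupp hv.test.2.2)⟩
    exact (χ.hasCompactSupport.isCompact.union hv.test.2.1.isCompact).of_isClosed_subset
      (isClosed_tsupport _) hsub
  obtain ⟨i1, i2⟩ := int_of_test hΩ hu hwt
  have hdiff : (fun z i => u z i - w z i) = fun z i => ∑ j, (if i = j then 1 - χ z else 0) *
      (u z j - v z j) := by
    funext z i
    simp only [ite_mul, zero_mul, Finset.sum_ite_eq, Finset.mem_univ, if_true, w]
    ring
  refine ⟨w, ⟨hwt, i1, i2, ?_⟩, ?_⟩
  · have hle : ∀ x ∈ Ω, vsq (fun z i => u z i - w z i) x + gsq (fun z i => u z i - w z i) x ≤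
        K * (vsq (fun z i => u z i - v z i) x + gsq (fun z i => u z i - v z i) x) := by
      intro x hx
      have c1 : |1 - χ x| ≤ 1 := by
        rw [abs_le]; constructor <;> linarith [χ.nonneg (x := x), χ.le_one (x := x)]
      have k1 : vsq (fun z i => u z i - w z i) x ≤ vsq (fun z i => u z i - v z i) x := by
        unfold vsq
        refine Finset.sum_le_sum fun i _ => ?_
        change (u x i - w x i) ^ 2 ≤ (u x i - v x i) ^ 2
        have : u x i - w x i = (1 - χ x) * (u x i - v x i) := by simp only [w]; ring
        rw [this, mul_pow]
        have := (sq_le_one_iff_abs_le_one (1 - χ x)).mpr c1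
        nlinarith [sq_nonneg (u x i - v x i)]
      have k2 : gsq (fun z i => u z i - w z i) x ≤ 162 * (1 + B) ^ 2 *
          (vsq (fun z i => u z i - v z i) x + gsq (fun z i => u z i - v z i) x) := by
        rw [hdiff]
        apply gsq_matrix (T := fun i j z => if i = j then 1 - χ z else 0)
          (w := fun z i => u z i - v z i)
        · intro i j
          by_cases h : i = j
          · simp only [h, if_true]
            exact diffAt_of_contDiffAt (contDiffAt_const.sub hχs.contDiffAt)
          · simp [h]
        · intro j
          exact diffAt_of_contDiffAt (contDiffAt_comp
            (contDiffAt_sub' (hsm x hx) hv.test.1.contDiffAt) j)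
        · intro i j
          by_cases h : i = j
          · simp only [h, if_true]; linarith
          · simp only [h, if_false, abs_zero]; linarith
        · intro i j k
          by_cases h : i = j
          · simp only [h, if_true]
            rw [pd_sub (differentiableAt_const _) (diffAt_of_contDiffAt hχs.contDiffAt), pd_const,
              zero_sub, abs_neg]
            linarith [hχB k x]
          · simp only [h, if_false, pd_const, abs_zero]; linarith
      have k3 := gsq_nonneg (fun z i => u z i - v z i) x
      rw [hK]
      linarith
    have := setIntegral_mono_on (i1.add i2) ((hv.int_v.add hv.int_g).const_mul K)
      hΩ.measurableSet hle
    refine lt_of_le_of_lt this ?_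
    rw [integral_const_mul]
    have h := hv.lt
    rw [lt_div_iff₀ hK0, mul_comm] at h
    exact h
  · intro x hx
    have : χ x = 1 := χ.one_of_mem_closedBall (ball_subset_closedBall hx)
    funext i
    simp [w, this]

/-! ### The local energy estimate -/

lemma integrable_mul_inv_norm {g : E3 → ℝ} (hg : Continuous g) (hc : HasCompactSupport g) (y : E3) :
    Integrable fun x => g x * ‖x - y‖⁻¹ := by
  have hloc : LocallyIntegrable (fun x : E3 => ‖x‖⁻¹) := by
    refine locallyIntegrable_of_norm_le_rpow (C := 1) (α := 1) (by simp) (by simp) ?_ ?_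
    · refine Eventually.of_forall fun x => ?_
      rw [Real.rpow_neg_one, norm_inv, norm_norm, one_mul]
    · exact (measurable_norm.inv).aestronglyMeasurable
  have h1 : Continuous fun x => g (x + y) := hg.comp (continuous_add_const y)
  have h2 : HasCompactSupport fun x => g (x + y) :=
    hc.comp_homeomorph (Homeomorph.addRight y)
  have := (hloc.integrable_smul_left_of_hasCompactSupport h1 h2).comp_sub_right y
  simpa using this

lemma isTestOn_mul {C₁ ρ : ℝ} {η : E3 → ℝ} (hη : IsCutoff C₁ ρ η) {Ω : Set E3}
    {w : E3 → Fin 3 → ℝ} (hw : IsTestOn Ω w) : IsTestOn Set.univ fun z i => η z * w z i := by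
  refine ⟨contDiff_pi.mpr fun i => hη.smooth.mul (hw.comp i).1, ?_, Set.subset_univ _⟩
  refine HasCompactSupport.intro hw.2.1 fun x hx => ?_
  funext i
  simp [image_eq_zero_of_notMem_tsupport hx]

lemma measurableSet_annulus {Ω : Set E3} (hΩ : IsOpen Ω) (δ ρ : ℝ) :
    MeasurableSet (Ω ∩ {x : E3 | δ < ‖x‖ ∧ ‖x‖ < ρ}) :=
  (hΩ.inter ((isOpen_lt continuous_const continuous_norm).inter
    (isOpen_lt continuous_norm continuous_const))).measurableSet

lemma integrableOn_annulus {Ω : Set E3} (hΩ : IsOpen Ω) {u : E3 → Fin 3 → ℝ} (hu : MemH10 Ω u)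
    {δ : ℝ} (hδ : 0 < δ) (ρ : ℝ) :
    IntegrableOn (fun x => gsq u x * ‖x‖⁻¹) (Ω ∩ {x : E3 | δ < ‖x‖ ∧ ‖x‖ < ρ}) := by
  have h1 : IntegrableOn (gsq u) (Ω ∩ {x : E3 | δ < ‖x‖ ∧ ‖x‖ < ρ}) :=
    (hu.int_gsq hΩ).mono_set Set.inter_subset_left
  refine Integrable.mono' (h1.const_mul δ⁻¹)
    (h1.aestronglyMeasurable.mul (measurable_norm.inv).aestronglyMeasurable) ?_
  filter_upwards [ae_restrict_mem (measurableSet_annulus hΩ δ ρ)] with x hx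
  have := gsq_nonneg u x
  rw [Real.norm_of_nonneg (by positivity), mul_comm]
  gcongr
  exact hx.2.1.le

/-- Away from the origin the weighted energy of `η w` controls that of `u`. -/
lemma annulus_lower {C₁ ρ δ ε : ℝ} {η : E3 → ℝ} {y : E3} {Ω : Set E3} {u w : E3 → Fin 3 → ℝ}
    (hΩ : IsOpen Ω) (hu : MemH10 Ω u) (hη : IsCutoff C₁ ρ η)
    (hδ : ‖y‖ < δ) (hw : IsApprox Ω u ε w) :
    (1 / 4) * (∫ x in Ω ∩ {x : E3 | δ < ‖x‖ ∧ ‖x‖ < ρ}, gsq u x * ‖x‖⁻¹) - (1 / 2) * δ⁻¹ * ε ≤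
      ∫ x, gsq (fun z i => η z * w z i) x * ‖x - y‖⁻¹ := by
  have hδ0 : 0 < δ := (norm_nonneg y).trans_lt hδ
  set A := Ω ∩ {x : E3 | δ < ‖x‖ ∧ ‖x‖ < ρ} with hA
  have hAm : MeasurableSet A := measurableSet_annulus hΩ δ ρ
  have hT := isTestOn_mul hη hw.test
  have hI := integrable_mul_inv_norm (continuous_gsq hT.1) (compact_gsq hT.2.1) y
  have hIu := integrableOn_annulus hΩ hu hδ0 ρ
  have hIg : IntegrableOn (gsq fun z i => u z i - w z i) A := hw.int_g.mono_set Set.inter_subset_left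
  have h1 : ∫ x in A, gsq (fun z i => η z * w z i) x * ‖x - y‖⁻¹ ≤
      ∫ x, gsq (fun z i => η z * w z i) x * ‖x - y‖⁻¹ :=
    setIntegral_le_integral hI (Eventually.of_forall fun x =>
      mul_nonneg (gsq_nonneg _ _) (by positivity))
  have h2 : ∫ x in A, ((1 / 4) * (gsq u x * ‖x‖⁻¹) -
      (1 / 2) * δ⁻¹ * gsq (fun z i => u z i - w z i) x) ≤
      ∫ x in A, gsq (fun z i => η z * w z i) x * ‖x - y‖⁻¹ := by
    refine setIntegral_mono_on ((hIu.const_mul _).sub (hIg.const_mul _)) hI.integrableOn hAm ?_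
    rintro x ⟨hxΩ, hx1, hx2⟩
    have hx0 : 0 < ‖x‖ := hδ0.trans hx1
    have e1 : gsq (fun z i => η z * w z i) x = gsq w x := by
      unfold gsq
      refine Finset.sum_congr rfl fun i _ => Finset.sum_congr rfl fun k _ => ?_
      congr 1
      apply pd_congr
      have : ∀ᶠ z in nhds x, ‖z‖ < 5 / 4 * ρ :=
        (isOpen_lt continuous_norm continuous_const).mem_nhds (by
          change ‖x‖ < 5 / 4 * ρ
          linarith)
      filter_upwards [this] with z hz
      rw [hη.one z hz, one_mul]
    have e2 : (2 * ‖x‖)⁻¹ ≤ ‖x - y‖⁻¹ := by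
      have h3 : 0 < ‖x - y‖ := by
        have := norm_sub_norm_le x y
        linarith
      have h4 : ‖x - y‖ ≤ 2 * ‖x‖ := by
        have := norm_sub_le x y
        linarith
      gcongr
    have e3 := gsq_le_left (hu.smooth hΩ x hxΩ) (hw.test.1.contDiffAt (x := x))
    have e4 := gsq_nonneg (fun z i => u z i - w z i) x
    have e5 : ‖x‖⁻¹ ≤ δ⁻¹ := by gcongr
    have e6 : 0 < ‖x‖⁻¹ := by positivity
    rw [e1]
    calc _ ≤ (1 / 4) * (gsq u x * ‖x‖⁻¹) -
          (1 / 2) * ‖x‖⁻¹ * gsq (fun z i => u z i - w z i) x := by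
          gcongr
      _ ≤ gsq w x * (2 * ‖x‖)⁻¹ := by
          rw [mul_inv]
          nlinarith
      _ ≤ _ := mul_le_mul_of_nonneg_left e2 (gsq_nonneg _ _)
  rw [integral_sub (hIu.const_mul _) (hIg.const_mul _), integral_const_mul, integral_const_mul] at h2
  have h3 : ∫ x in A, gsq (fun z i => u z i - w z i) x ≤ ε :=
    (setIntegral_mono_set hw.int_g (Eventually.of_forall fun x => gsq_nonneg _ x)
      (LE.le.eventuallyLE Set.inter_subset_left)).trans hw.lt_g.le
  have h4 : (1 / 2) * δ⁻¹ * ∫ x in A, gsq (fun z i => u z i - w z i) x ≤ (1 / 2) * δ⁻¹ * ε := by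
    gcongr
  linarith

/-- Bound for the right-hand side of the energy inequality of an approximant. -/
lemma approx_upper {ρ ε : ℝ} {Ω : Set E3} {u w : E3 → Fin 3 → ℝ}
    (hΩ : IsOpen Ω) (hu : MemH10 Ω u) (hρ : 0 < ρ) (hw : IsApprox Ω u ε w) :
    (∫ x in Ω ∩ ball (0 : E3) (2 * ρ), ((ρ ^ 3)⁻¹ * vsq w x + ρ⁻¹ * gsq w x)) ≤
      2 * (∫ x in Ω ∩ ball (0 : E3) (2 * ρ), ((ρ ^ 3)⁻¹ * vsq u x + ρ⁻¹ * gsq u x)) +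
      2 * ((ρ ^ 3)⁻¹ + ρ⁻¹) * ε ∧
    (∫ x in Ω, (vsq w x + gsq w x)) ≤ 2 * (∫ x in Ω, (vsq u x + gsq u x)) + 2 * ε := by
  have hm : MeasurableSet (Ω ∩ ball (0 : E3) (2 * ρ)) := (hΩ.inter isOpen_ball).measurableSet
  have hsub : Ω ∩ ball (0 : E3) (2 * ρ) ⊆ Ω := Set.inter_subset_left
  have hIs := hw.int_v.add hw.int_g
  have p1 : 0 < (ρ ^ 3)⁻¹ := by positivity
  have p2 : 0 < ρ⁻¹ := by positivity
  have hlt := hw.lt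
  constructor
  · have hu1 : IntegrableOn (fun x => (ρ ^ 3)⁻¹ * vsq u x + ρ⁻¹ * gsq u x)
        (Ω ∩ ball (0 : E3) (2 * ρ)) :=
      ((hu.int_vsq hΩ).mono_set hsub |>.const_mul _).add ((hu.int_gsq hΩ).mono_set hsub |>.const_mul _)
    have hs1 := (hIs.const_mul (2 * ((ρ ^ 3)⁻¹ + ρ⁻¹)))
    have hs2 : IntegrableOn _ (Ω ∩ ball (0 : E3) (2 * ρ)) := IntegrableOn.mono_set hs1 hsub
    have h1 := setIntegral_mono_on
      ((hw.test.int_vsq.integrableOn.const_mul (ρ ^ 3)⁻¹).add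
        (hw.test.int_gsq.integrableOn.const_mul ρ⁻¹))
      ((hu1.const_mul 2).add hs2) hm (fun x hx => by
        have a1 := vsq_le_right u w x
        have a2 := gsq_le_right (hu.smooth hΩ x hx.1) (hw.test.1.contDiffAt (x := x))
        have a3 := vsq_nonneg (fun z i => u z i - w z i) x
        have a4 := gsq_nonneg (fun z i => u z i - w z i) x
        simp only [Pi.add_apply]
        nlinarith [mul_le_mul_of_nonneg_left a1 p1.le, mul_le_mul_of_nonneg_left a2 p2.le,
          mul_nonneg p1.le a4, mul_nonneg p2.le a3])
    refine h1.trans ?_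
    rw [integral_add' (hu1.const_mul 2) hs2, integral_const_mul]
    have h2 := setIntegral_mono_set hs1 (Eventually.of_forall fun x => by
        have a3 := vsq_nonneg (fun z i => u z i - w z i) x
        have a4 := gsq_nonneg (fun z i => u z i - w z i) x
        simp only [Pi.add_apply, Pi.zero_apply]
        positivity) (LE.le.eventuallyLE hsub)
    have h3 : 2 * ((ρ ^ 3)⁻¹ + ρ⁻¹) * (∫ x in Ω, (vsq (fun z i => u z i - w z i) x +
      gsq (fun z i => u z i - w z i) x)) ≤ 2 * ((ρ ^ 3)⁻¹ + ρ⁻¹) * ε := by gcongr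
    simp only [Pi.add_apply, integral_const_mul] at h2 ⊢
    linarith
  · have hu1 : IntegrableOn (fun x => vsq u x + gsq u x) Ω := (hu.int_vsq hΩ).add (hu.int_gsq hΩ)
    have h1 := setIntegral_mono_on
      (hw.test.int_vsq.integrableOn.add hw.test.int_gsq.integrableOn)
      ((hu1.const_mul 2).add (hIs.const_mul 2)) hΩ.measurableSet (fun x hx => by
        have a1 := vsq_le_right u w x
        have a2 := gsq_le_right (hu.smooth hΩ x hx) (hw.test.1.contDiffAt (x := x))
        simp only [Pi.add_apply]
        linarith)
    refine h1.trans ?_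
    rw [integral_add' (hu1.const_mul 2) (hIs.const_mul 2), integral_const_mul, integral_const_mul]
    simp only [Pi.add_apply]
    linarith

/-- The value of a solution at `y` and its weighted energy outside `B_δ` are controlled by
its scaled `H¹` norm on `Ω ∩ B_{2ρ}`. -/
lemma main_est {α c₀ : ℝ} (hc₀ : 0 < c₀) (hQPD : QPDhyp α c₀) : ∃ C, 0 < C ∧
    ∀ (Ω : Set E3) (u : E3 → Fin 3 → ℝ) (ρ : ℝ) (y : E3) (δ : ℝ), IsOpen Ω → MemH10 Ω u → 0 < ρ →
    (∀ x ∈ Ω, x ∈ ball (0 : E3) (2 * ρ) → ∀ i, lame α u x i = 0) →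
    y ∈ Ω → ‖y‖ < ρ / 2 → ‖y‖ < δ →
    vsq u y + (∫ x in Ω ∩ {x : E3 | δ < ‖x‖ ∧ ‖x‖ < ρ}, gsq u x * ‖x‖⁻¹) ≤
      C * ∫ x in Ω ∩ ball (0 : E3) (2 * ρ), ((ρ ^ 3)⁻¹ * vsq u x + ρ⁻¹ * gsq u x) := by
  obtain ⟨C₁, hC₁, hcut⟩ := exists_cutoff
  obtain ⟨C, hC, hE⟩ := energy_upper α hC₁
  refine ⟨(2 + 4 / c₀) * (2 * C), by positivity, ?_⟩
  intro Ω u ρ y δ hΩ hu hρ hL hyΩ hyρ hyδ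
  obtain ⟨η, hη⟩ := hcut ρ hρ
  obtain ⟨d, hd, hd1, hd2⟩ : ∃ d, 0 < d ∧ closedBall y (2 * d) ⊆ Ω ∧ ball y d ⊆ ball 0 ρ := by
    obtain ⟨r, hr, hrs⟩ := Metric.isOpen_iff.mp (hΩ.inter (isOpen_ball (x := (0 : E3)) (ε := ρ))) y
      ⟨hyΩ, by rw [mem_ball_zero_iff]; linarith⟩
    refine ⟨r / 3, by positivity, fun x hx => (hrs (closedBall_subset_ball (by linarith) hx)).1,
      fun x hx => (hrs (ball_subset_ball (by linarith) hx)).2⟩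
  obtain ⟨B, hB, hBE⟩ := hE Ω u ρ y d η hΩ (hu.smooth hΩ) hρ hη hL hyρ hd
    ((ball_subset_closedBall.trans (closedBall_subset_closedBall (by linarith))).trans hd1) hd2
  set N := ∫ x in Ω ∩ ball (0 : E3) (2 * ρ), ((ρ ^ 3)⁻¹ * vsq u x + ρ⁻¹ * gsq u x) with hN
  set I := ∫ x in Ω ∩ {x : E3 | δ < ‖x‖ ∧ ‖x‖ < ρ}, gsq u x * ‖x‖⁻¹ with hI
  set S := ∫ x in Ω, (vsq u x + gsq u x) with hS
  have key : ∀ t : ℝ, 0 < t → (1 / 2) * vsq u y + c₀ * ((1 / 4) * I - (1 / 2) * δ⁻¹ * t ^ 2) ≤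
      C * (2 * N + 2 * ((ρ ^ 3)⁻¹ + ρ⁻¹) * t ^ 2) + B * t * (2 * S + 2 * t ^ 2) + B * t := by
    intro t ht
    obtain ⟨w, hw, hwy⟩ := hu.approx_ball hΩ hd hd1 (ε := t ^ 2) (by positivity)
    have h1 := hQPD _ (isTestOn_mul hη hw.test) y
    have h2 := hBE w hw.test hwy hw.int_g t ht
    have h3 := annulus_lower hΩ hu hη hyδ hw
    obtain ⟨h4, h5⟩ := approx_upper hΩ hu hρ hw
    have h6 := hw.lt_g.le
    have e1 : ∑ i, (η y * w y i) ^ 2 = vsq u y := by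
      rw [hη.one y (by linarith), hwy y (mem_ball_self hd)]
      simp [vsq]
    have h7 : B * t⁻¹ * ∫ x in Ω, gsq (fun z i => u z i - w z i) x ≤ B * t := by
      calc _ ≤ B * t⁻¹ * t ^ 2 := by gcongr
        _ = B * t := by field_simp
    rw [e1] at h1
    change (1 / 2) * vsq u y + c₀ * (∫ x, gsq (fun z i => η z * w z i) x * ‖x - y‖⁻¹) ≤ _ at h1
    have h8 := mul_le_mul_of_nonneg_left h3 hc₀.le
    have h9 := mul_le_mul_of_nonneg_left h4 hC.le
    have h10 := mul_le_mul_of_nonneg_left h5 (by positivity : 0 ≤ B * t)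
    linarith
  have hlim : (1 / 2) * vsq u y + c₀ * ((1 / 4) * I) ≤ C * (2 * N) := by
    have f1 : Tendsto (fun t : ℝ => (1 / 2) * vsq u y +
        c₀ * ((1 / 4) * I - (1 / 2) * δ⁻¹ * t ^ 2)) (nhdsWithin 0 (Set.Ioi 0))
        (nhds ((1 / 2) * vsq u y + c₀ * ((1 / 4) * I))) := by
      refine Tendsto.mono_left (Continuous.tendsto' (by fun_prop) _ _ (by ring)) nhdsWithin_le_nhds
    have f2 : Tendsto (fun t : ℝ => C * (2 * N + 2 * ((ρ ^ 3)⁻¹ + ρ⁻¹) * t ^ 2) +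
        B * t * (2 * S + 2 * t ^ 2) + B * t) (nhdsWithin 0 (Set.Ioi 0)) (nhds (C * (2 * N))) := by
      refine Tendsto.mono_left (Continuous.tendsto' (by fun_prop) _ _ (by ring)) nhdsWithin_le_nhds
    exact le_of_tendsto_of_tendsto f1 f2 (by
      filter_upwards [self_mem_nhdsWithin] with t ht using key t ht)
  have hI0 : 0 ≤ I := integral_nonneg fun x => mul_nonneg (gsq_nonneg _ _) (by positivity)
  have hv0 := vsq_nonneg u y
  have g1 : vsq u y ≤ 2 * (C * (2 * N)) := by nlinarith
  have g2 : I ≤ 4 / c₀ * (C * (2 * N)) := by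
    rw [div_mul_eq_mul_div, le_div_iff₀ hc₀]
    linarith
  calc _ ≤ 2 * (C * (2 * N)) + 4 / c₀ * (C * (2 * N)) := add_le_add g1 g2
    _ = _ := by ring

/-! ### The Poincaré inequality on balls -/

/-- `|Df(x)|²` for a scalar function `f`. -/
def sgrad (f : E3 → ℝ) (x : E3) : ℝ := ∑ k, (pd k f x) ^ 2

lemma sgrad_nonneg (f : E3 → ℝ) (x : E3) : 0 ≤ sgrad f x := Finset.sum_nonneg fun _ _ => sq_nonneg _

lemma continuous_sgrad {f : E3 → ℝ} (hf : ContDiff ℝ (⊤ : ℕ∞) f) : Continuous (sgrad f) :=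
  continuous_finsetSum _ fun k _ => (continuous_pd hf k).pow 2

lemma fderiv_sq_le (f : E3 → ℝ) (x v : E3) : (fderiv ℝ f x v) ^ 2 ≤ ‖v‖ ^ 2 * sgrad f x := by
  have h1 : fderiv ℝ f x v = ∑ k, v k * pd k f x := by
    conv_lhs => rw [← (EuclideanSpace.basisFun (Fin 3) ℝ).sum_repr v]
    simp [pd]
  rw [h1, EuclideanSpace.real_norm_sq_eq]
  exact Finset.sum_mul_sq_le_sq_mul_sq _ _ _

/-- Squared increments are bounded by the mean of `|Df|²` along the segment. -/
lemma sq_sub_le_segment {f : E3 → ℝ} (hf : ContDiff ℝ (⊤ : ℕ∞) f) (x y : E3) :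
    (f x - f y) ^ 2 ≤ ‖x - y‖ ^ 2 * ∫ s in (0 : ℝ)..1, sgrad f (s • x + (1 - s) • y) := by
  set γ : ℝ → E3 := fun s => s • x + (1 - s) • y with hγ
  have hγc : Continuous γ := by fun_prop
  have hγd : ∀ s, HasDerivAt γ (x - y) s := by
    intro s
    have h1 : HasDerivAt (fun s : ℝ => s • x) ((1 : ℝ) • x) s := (hasDerivAt_id s).smul_const x
    have h2 : HasDerivAt (fun s : ℝ => (1 - s) • y) ((-1 : ℝ) • y) s :=
      ((hasDerivAt_id s).const_sub 1).smul_const y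
    have h3 : x - y = (1 : ℝ) • x + (-1 : ℝ) • y := by simp [sub_eq_add_neg]
    rw [h3]
    exact h1.add h2
  have hfd : ∀ s, HasDerivAt (fun s => f (γ s)) (fderiv ℝ f (γ s) (x - y)) s := fun s =>
    ((hf.differentiable (by simp) (γ s)).hasFDerivAt).comp_hasDerivAt s (hγd s)
  have hdc : Continuous fun s => fderiv ℝ f (γ s) (x - y) :=
    (((hf.continuous_fderiv (by simp)).comp hγc).clm_apply continuous_const)
  have hgc : Continuous fun s => sgrad f (γ s) := (continuous_sgrad hf).comp hγc
  have h1 : ∫ s in (0 : ℝ)..1, fderiv ℝ f (γ s) (x - y) = f x - f y := by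
    rw [intervalIntegral.integral_eq_sub_of_hasDerivAt (fun s _ => hfd s)
      (hdc.intervalIntegrable _ _)]
    simp [hγ]
  set m := f x - f y with hm
  -- integrate `2 m p - m² ≤ p²` along the segment
  have h2 : ∫ s in (0 : ℝ)..1, (2 * m * fderiv ℝ f (γ s) (x - y) - m ^ 2) ≤
      ∫ s in (0 : ℝ)..1, ‖x - y‖ ^ 2 * sgrad f (γ s) := by
    apply intervalIntegral.integral_mono_on (by norm_num)
    · exact (Continuous.intervalIntegrable (by fun_prop) _ _)
    · exact (Continuous.intervalIntegrable (by fun_prop) _ _)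
    · intro s _
      refine le_trans ?_ (fderiv_sq_le f (γ s) (x - y))
      nlinarith [sq_nonneg (m - fderiv ℝ f (γ s) (x - y))]
  rw [intervalIntegral.integral_sub (Continuous.intervalIntegrable (by fun_prop) _ _)
    (Continuous.intervalIntegrable (by fun_prop) _ _), intervalIntegral.integral_const_mul, h1,
    intervalIntegral.integral_const_mul] at h2
  simp only [intervalIntegral.integral_const, sub_zero, one_smul] at h2
  nlinarith

/-- Pulling back under a dilation of ratio at least `1/2` costs a factor at most `8`. -/
lemma lintegral_dilation {G : E3 → ENNReal} (hG : Measurable G) {r s : ℝ} (hs : 1 / 2 ≤ s)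
    (hs1 : s ≤ 1) {y : E3} (hy : y ∈ ball (0 : E3) r) :
    ∫⁻ x in ball (0 : E3) r, G (s • x + (1 - s) • y) ≤ 8 * ∫⁻ x in ball (0 : E3) r, G x := by
  have hs0 : 0 < s := by linarith
  have hi : Measurable ((ball (0 : E3) r).indicator G) := hG.indicator measurableSet_ball
  rw [← lintegral_indicator measurableSet_ball, ← lintegral_indicator measurableSet_ball]
  calc ∫⁻ x, (ball (0 : E3) r).indicator (fun x => G (s • x + (1 - s) • y)) x
      ≤ ∫⁻ x, (ball (0 : E3) r).indicator G (s • x + (1 - s) • y) := by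
        apply lintegral_mono
        intro x
        by_cases hx : x ∈ ball (0 : E3) r
        · have : s • x + (1 - s) • y ∈ ball (0 : E3) r :=
            convex_ball (0 : E3) r hx hy hs0.le (by linarith) (by ring)
          simp [Set.indicator_of_mem hx, Set.indicator_of_mem this]
        · simp [Set.indicator_of_notMem hx]
    _ = ∫⁻ z, (ball (0 : E3) r).indicator G (z + (1 - s) • y)
          ∂(Measure.map (fun x : E3 => s • x) volume) := by
        exact (lintegral_map (f := fun z => (ball (0 : E3) r).indicator G (z + (1 - s) • y))
          (hi.comp (measurable_add_const _)) (measurable_const_smul s)).symm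
    _ = ENNReal.ofReal |(s ^ 3)⁻¹| * ∫⁻ z, (ball (0 : E3) r).indicator G z := by
        rw [Measure.map_addHaar_smul _ hs0.ne', lintegral_smul_measure,
          lintegral_add_right_eq_self]
        simp
    _ ≤ _ := by
        gcongr
        rw [← ENNReal.ofReal_ofNat 8]
        apply ENNReal.ofReal_le_ofReal
        rw [abs_of_pos (by positivity), inv_le_comm₀ (by positivity) (by norm_num)]
        calc (8 : ℝ)⁻¹ = (1 / 2) ^ 3 := by norm_num
          _ ≤ s ^ 3 := by gcongr

lemma poincare_double {f : E3 → ℝ} (hf : ContDiff ℝ (⊤ : ℕ∞) f) {r : ℝ} (hr : 0 < r) :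
    ∫⁻ y in ball (0 : E3) r, ∫⁻ x in ball (0 : E3) r, ENNReal.ofReal ((f x - f y) ^ 2) ≤
      ENNReal.ofReal (4 * r ^ 2) * (volume (ball (0 : E3) r) *
        (8 * ∫⁻ x in ball (0 : E3) r, ENNReal.ofReal (sgrad f x))) := by
  set B := ball (0 : E3) r with hB
  set G : E3 → ENNReal := fun x => ENNReal.ofReal (sgrad f x) with hG
  have hGm : Measurable G := (continuous_sgrad hf).measurable.ennreal_ofReal
  have hp : ∀ x ∈ B, ∀ y ∈ B, ENNReal.ofReal ((f x - f y) ^ 2) ≤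
      ENNReal.ofReal (4 * r ^ 2) * ∫⁻ s in Set.Ioc (0 : ℝ) 1, G (s • x + (1 - s) • y) := by
    intro x hx y hy
    have hc : Continuous fun s : ℝ => sgrad f (s • x + (1 - s) • y) :=
      (continuous_sgrad hf).comp (by fun_prop)
    have h1 : (f x - f y) ^ 2 ≤ (4 * r ^ 2) * ∫ s in Set.Ioc (0 : ℝ) 1,
        sgrad f (s • x + (1 - s) • y) := by
      refine (sq_sub_le_segment hf x y).trans ?_
      rw [intervalIntegral.integral_of_le zero_le_one]
      have h0 : 0 ≤ ∫ s in Set.Ioc (0 : ℝ) 1, sgrad f (s • x + (1 - s) • y) :=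
        integral_nonneg fun s => sgrad_nonneg _ _
      have h2 : ‖x - y‖ ≤ 2 * r := by
        rw [hB, mem_ball_zero_iff] at hx hy
        linarith [norm_sub_le x y]
      have h3 : ‖x - y‖ ^ 2 ≤ 4 * r ^ 2 := by nlinarith [norm_nonneg (x - y)]
      gcongr
    refine (ENNReal.ofReal_le_ofReal h1).trans ?_
    rw [ENNReal.ofReal_mul (by positivity), ofReal_integral_eq_lintegral_ofReal
      (hc.integrableOn_Ioc) (Eventually.of_forall fun s => sgrad_nonneg _ _)]
  have hslice : ∀ s ∈ Set.Ioc (0 : ℝ) 1, ∫⁻ y in B, ∫⁻ x in B, G (s • x + (1 - s) • y) ≤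
      volume B * (8 * ∫⁻ x in B, G x) := by
    intro s hs
    have hconst : ∀ H : E3 → ENNReal, (∀ y ∈ B, H y ≤ 8 * ∫⁻ x in B, G x) →
        ∫⁻ y in B, H y ≤ volume B * (8 * ∫⁻ x in B, G x) := by
      intro H hH
      refine (setLIntegral_mono' measurableSet_ball hH).trans ?_
      rw [setLIntegral_const, mul_comm]
    rcases le_total (1 / 2) s with h | h
    · exact hconst _ fun y hy => lintegral_dilation hGm h hs.2 hy
    · rw [lintegral_lintegral_swap]
      · refine hconst _ fun x hx => ?_
        have := lintegral_dilation hGm (r := r) (s := 1 - s) (by linarith) (by linarith [hs.1]) hx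
        simpa [add_comm, sub_sub_cancel] using this
      · exact (hGm.comp (by fun_prop : Measurable fun p : E3 × E3 => s • p.2 + (1 - s) • p.1)).aemeasurable
  calc ∫⁻ y in B, ∫⁻ x in B, ENNReal.ofReal ((f x - f y) ^ 2)
      ≤ ∫⁻ y in B, ∫⁻ x in B, ENNReal.ofReal (4 * r ^ 2) *
          ∫⁻ s in Set.Ioc (0 : ℝ) 1, G (s • x + (1 - s) • y) :=
        setLIntegral_mono' measurableSet_ball fun y hy =>
          setLIntegral_mono' measurableSet_ball fun x hx => hp x hx y hy
    _ = ENNReal.ofReal (4 * r ^ 2) * ∫⁻ y in B, ∫⁻ x in B,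
          ∫⁻ s in Set.Ioc (0 : ℝ) 1, G (s • x + (1 - s) • y) := by
        rw [← lintegral_const_mul' _ _ ENNReal.ofReal_ne_top]
        refine lintegral_congr fun y => ?_
        rw [← lintegral_const_mul' _ _ ENNReal.ofReal_ne_top]
    _ = ENNReal.ofReal (4 * r ^ 2) * ∫⁻ s in Set.Ioc (0 : ℝ) 1, ∫⁻ y in B, ∫⁻ x in B,
          G (s • x + (1 - s) • y) := by
        congr 1
        rw [← lintegral_lintegral_swap (f := fun y s => ∫⁻ x in B, G (s • x + (1 - s) • y))]
        · refine lintegral_congr fun y => ?_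
          rw [lintegral_lintegral_swap]
          exact (hGm.comp (by fun_prop :
            Measurable fun p : E3 × ℝ => p.2 • p.1 + (1 - p.2) • y)).aemeasurable
        · have : Measurable fun q : (E3 × ℝ) × E3 => G (q.1.2 • q.2 + (1 - q.1.2) • q.1.1) :=
            hGm.comp (by fun_prop)
          exact (this.lintegral_prod_right').aemeasurable
    _ ≤ ENNReal.ofReal (4 * r ^ 2) * ∫⁻ _ in Set.Ioc (0 : ℝ) 1, volume B * (8 * ∫⁻ x in B, G x) := by
        gcongr 1
        exact setLIntegral_mono' measurableSet_Ioc hslice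
    _ = _ := by simp

/-- Poincaré's inequality; the constant `a` is the value of `f` at a point where the mean square
deviation does not exceed its average over the ball. -/
lemma poincare {f : E3 → ℝ} (hf : ContDiff ℝ (⊤ : ℕ∞) f) {r : ℝ} (hr : 0 < r) :
    ∃ a : ℝ, ∫ x in ball (0 : E3) r, (f x - a) ^ 2 ≤
      32 * r ^ 2 * ∫ x in ball (0 : E3) r, sgrad f x := by
  have hfc := hf.continuous
  have hon : ∀ {g : E3 → ℝ}, Continuous g → IntegrableOn g (ball (0 : E3) r) := fun hg =>
    (hg.continuousOn.integrableOn_compact (isCompact_closedBall (0 : E3) r)).mono_set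
      ball_subset_closedBall
  have hv0 : volume (ball (0 : E3) r) ≠ 0 := (measure_ball_pos volume (0 : E3) hr).ne'
  have hvt : volume (ball (0 : E3) r) ≠ ⊤ := measure_ball_lt_top.ne
  obtain ⟨y, -, hy⟩ := exists_le_setLAverage hv0 hvt
    (f := fun y => ∫⁻ x in ball (0 : E3) r, ENNReal.ofReal ((f x - f y) ^ 2)) (by
      have : Measurable fun q : E3 × E3 => ENNReal.ofReal ((f q.2 - f q.1) ^ 2) := by
        have := hfc.measurable
        fun_prop
      exact (this.lintegral_prod_right').aemeasurable)
  refine ⟨f y, ?_⟩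
  rw [setLAverage_eq] at hy
  have h1 : ∫⁻ x in ball (0 : E3) r, ENNReal.ofReal ((f x - f y) ^ 2) ≤
      ENNReal.ofReal (4 * r ^ 2) * (8 * ∫⁻ x in ball (0 : E3) r, ENNReal.ofReal (sgrad f x)) := by
    refine hy.trans ?_
    rw [ENNReal.div_le_iff hv0 hvt]
    refine (poincare_double hf hr).trans (le_of_eq ?_)
    ring
  rw [← ofReal_integral_eq_lintegral_ofReal (hon (by fun_prop))
      (Eventually.of_forall fun x => sq_nonneg _),
    ← ofReal_integral_eq_lintegral_ofReal (hon (continuous_sgrad hf))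
      (Eventually.of_forall fun x => sgrad_nonneg _ _), ← ENNReal.ofReal_ofNat 8,
    ← ENNReal.ofReal_mul (by norm_num), ← ENNReal.ofReal_mul (by positivity)] at h1
  have h0 : 0 ≤ ∫ x in ball (0 : E3) r, sgrad f x := integral_nonneg fun x => sgrad_nonneg _ _
  rw [ENNReal.ofReal_le_ofReal_iff (by positivity)] at h1
  linarith

/-! ### The capacitary Poincaré inequality -/

lemma capa_nonneg (K : Set E3) : 0 ≤ capa K := by
  apply Real.sInf_nonneg
  rintro t ⟨f, -, -, -, rfl⟩
  exact integral_nonneg fun x => sgrad_nonneg f x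

lemma capa_le {K U : Set E3} {f : E3 → ℝ} (hf : ContDiff ℝ (⊤ : ℕ∞) f) (hc : HasCompactSupport f)
    (hU : IsOpen U) (hKU : K ⊆ U) (h1 : ∀ x ∈ U, f x = 1) : capa K ≤ ∫ x, sgrad f x := by
  refine csInf_le ⟨0, ?_⟩ ⟨f, hf, hc, ⟨U, hU, hKU, h1⟩, rfl⟩
  rintro t ⟨f, -, -, -, rfl⟩
  exact integral_nonneg fun x => sgrad_nonneg f x

lemma sgrad_zero {f : E3 → ℝ} {x : E3} (hx : x ∉ tsupport f) : sgrad f x = 0 := by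
  simp [sgrad, pd_eq_zero hx]

lemma integral_sgrad_eq {f : E3 → ℝ} {r : ℝ} (h : tsupport f ⊆ ball (0 : E3) r) :
    ∫ x, sgrad f x = ∫ x in ball (0 : E3) r, sgrad f x := by
  refine (setIntegral_eq_integral_of_forall_compl_eq_zero fun x hx => ?_).symm
  exact sgrad_zero fun h' => hx (h h')

lemma integrableOn_ball_of_continuous {g : E3 → ℝ} (hg : Continuous g) (r : ℝ) :
    IntegrableOn g (ball (0 : E3) r) :=
  (hg.continuousOn.integrableOn_compact (isCompact_closedBall (0 : E3) r)).mono_set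
    ball_subset_closedBall

lemma volume_real_ball_zero {r : ℝ} (hr : 0 < r) :
    volume.real (ball (0 : E3) r) = r ^ 3 * (π * 4 / 3) := by
  rw [Measure.real, EuclideanSpace.volume_ball_fin_three, ENNReal.toReal_mul, ENNReal.toReal_pow,
    ENNReal.toReal_ofReal hr.le, ENNReal.toReal_ofReal (by positivity)]

lemma IsCutoff.sgrad_le {C₁ ρ : ℝ} {η : E3 → ℝ} (hη : IsCutoff C₁ ρ η)
    (x : E3) : sgrad η x ≤ 3 * (C₁ / ρ) ^ 2 := by
  have : ∀ k, (pd k η x) ^ 2 ≤ (C₁ / ρ) ^ 2 := fun k => by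
    rw [← sq_abs]
    exact pow_le_pow_left₀ (abs_nonneg _) (hη.pd_le k x) 2
  simp only [sgrad, Fin.sum_univ_three]
  linarith [this 0, this 1, this 2]

/-- A compact piece of `B̄_ρ` has capacity at most a multiple of `ρ`. -/
lemma capa_le_radius {C₁ ρ : ℝ} {η : E3 → ℝ} (hρ : 0 < ρ) (hη : IsCutoff C₁ ρ η) {K : Set E3}
    (hK : K ⊆ closedBall (0 : E3) ρ) : capa K ≤ 32 * π * C₁ ^ 2 * ρ := by
  have hKU : K ⊆ ball (0 : E3) (5 / 4 * ρ) := hK.trans (closedBall_subset_ball (by linarith))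
  refine (capa_le hη.smooth hη.compact isOpen_ball hKU fun x hx => hη.one x
    (mem_ball_zero_iff.mp hx)).trans ?_
  rw [integral_sgrad_eq hη.supp]
  have h1 : ∫ x in ball (0 : E3) (2 * ρ), sgrad η x ≤
      ∫ x in ball (0 : E3) (2 * ρ), (3 * (C₁ / ρ) ^ 2 : ℝ) :=
    setIntegral_mono_on (integrableOn_ball_of_continuous (continuous_sgrad hη.smooth) _)
      (integrableOn_ball_of_continuous continuous_const _) measurableSet_ball
      fun x _ => hη.sgrad_le x
  refine h1.trans (le_of_eq ?_)
  rw [setIntegral_const, volume_real_ball_zero (by positivity), smul_eq_mul]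
  field_simp
  ring

/-- Testing the capacity with `η (1 - w / a)`; to be used with the constant `a` of Poincaré's
inequality for `w`. -/
lemma capa_mul_sq_le {C₁ ρ : ℝ} {η : E3 → ℝ} (hρ : 0 < ρ) (hη : IsCutoff C₁ ρ η) {K U : Set E3}
    (hK : K ⊆ closedBall (0 : E3) ρ) (hU : IsOpen U) (hKU : K ⊆ U) {w : E3 → ℝ}
    (hw : ContDiff ℝ (⊤ : ℕ∞) w) (hw0 : ∀ x ∈ U, w x = 0) (a : ℝ) :
    capa K * a ^ 2 ≤ 6 * (C₁ / ρ) ^ 2 * (∫ x in ball (0 : E3) (2 * ρ), (w x - a) ^ 2) +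
      2 * ∫ x in ball (0 : E3) (2 * ρ), sgrad w x := by
  have hwc := hw.continuous
  have n1 : 0 ≤ ∫ x in ball (0 : E3) (2 * ρ), (w x - a) ^ 2 := integral_nonneg fun x => sq_nonneg _
  have n2 : 0 ≤ ∫ x in ball (0 : E3) (2 * ρ), sgrad w x := integral_nonneg fun x => sgrad_nonneg _ _
  rcases eq_or_ne a 0 with rfl | ha
  · rw [zero_pow two_ne_zero, mul_zero]
    positivity
  set f : E3 → ℝ := fun x => η x * (1 - a⁻¹ * w x) with hf
  have hgs : ContDiff ℝ (⊤ : ℕ∞) fun x => 1 - a⁻¹ * w x := contDiff_const.sub (contDiff_const.mul hw)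
  have hfs : ContDiff ℝ (⊤ : ℕ∞) f := hη.smooth.mul hgs
  have hsub : tsupport f ⊆ tsupport η := closure_mono fun x hx => by
    intro h
    apply hx
    simp only [hf]
    rw [h, zero_mul]
  have hfc : HasCompactSupport f :=
    hη.compact.of_isClosed_subset (isClosed_tsupport _) hsub
  have h1 := capa_le (U := U ∩ ball (0 : E3) (5 / 4 * ρ)) hfs hfc (hU.inter isOpen_ball)
    (Set.subset_inter hKU (hK.trans (closedBall_subset_ball (by linarith)))) (by
      rintro x ⟨hx1, hx2⟩
      simp only [hf]
      rw [hη.one x (mem_ball_zero_iff.mp hx2), hw0 x hx1]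
      simp)
  rw [integral_sgrad_eq (hsub.trans hη.supp)] at h1
  have hpt : ∀ x, a ^ 2 * sgrad f x ≤ 6 * (C₁ / ρ) ^ 2 * (w x - a) ^ 2 + 2 * sgrad w x := by
    intro x
    have e1 : ∀ k, pd k f x = pd k η x * (1 - a⁻¹ * w x) - η x * (a⁻¹ * pd k w x) := by
      intro k
      have d1 : DifferentiableAt ℝ w x := diffAt_of_contDiffAt hw.contDiffAt
      rw [hf, pd_mul (diffAt_of_contDiffAt hη.smooth.contDiffAt) (diffAt_of_contDiffAt
        hgs.contDiffAt), pd_sub (differentiableAt_const _) (d1.const_mul _),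
        pd_mul (differentiableAt_const _) d1, pd_const, pd_const]
      ring
    have e2 : ∀ k, a ^ 2 * (pd k f x) ^ 2 ≤ 2 * (w x - a) ^ 2 * (pd k η x) ^ 2 +
        2 * (pd k w x) ^ 2 := by
      intro k
      have : a * pd k f x = pd k η x * (a - w x) - η x * pd k w x := by
        rw [e1]; field_simp
      rw [← mul_pow, this]
      have h3 : (η x * pd k w x) ^ 2 ≤ (pd k w x) ^ 2 := by
        rw [mul_pow]
        have : (η x) ^ 2 ≤ 1 := pow_le_one₀ (hη.nonneg x) (hη.le_one x)
        nlinarith [sq_nonneg (pd k w x)]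
      nlinarith [sq_nonneg (pd k η x * (a - w x) + η x * pd k w x)]
    have e3 := hη.sgrad_le x
    have e4 : a ^ 2 * sgrad f x ≤ 2 * (w x - a) ^ 2 * sgrad η x + 2 * sgrad w x := by
      simp only [sgrad, Finset.mul_sum, ← Finset.sum_add_distrib]
      exact Finset.sum_le_sum fun k _ => e2 k
    nlinarith [mul_le_mul_of_nonneg_left e3 (by positivity : 0 ≤ 2 * (w x - a) ^ 2)]
  have i1 : IntegrableOn (fun x => 6 * (C₁ / ρ) ^ 2 * (w x - a) ^ 2) (ball (0 : E3) (2 * ρ)) :=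
    integrableOn_ball_of_continuous (by fun_prop) _
  have i2 : IntegrableOn (fun x => 2 * sgrad w x) (ball (0 : E3) (2 * ρ)) :=
    (integrableOn_ball_of_continuous (continuous_sgrad hw) _).const_mul 2
  calc capa K * a ^ 2 ≤ a ^ 2 * ∫ x in ball (0 : E3) (2 * ρ), sgrad f x := by
        rw [mul_comm]; gcongr
    _ = ∫ x in ball (0 : E3) (2 * ρ), a ^ 2 * sgrad f x := (integral_const_mul _ _).symm
    _ ≤ ∫ x in ball (0 : E3) (2 * ρ), (6 * (C₁ / ρ) ^ 2 * (w x - a) ^ 2 + 2 * sgrad w x) :=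
        setIntegral_mono_on ((integrableOn_ball_of_continuous (continuous_sgrad hfs) _).const_mul _)
          (i1.add i2) measurableSet_ball fun x _ => hpt x
    _ = _ := by rw [integral_add i1 i2, integral_const_mul, integral_const_mul]

lemma capa_poincare_scalar {C₁ ρ : ℝ} {η : E3 → ℝ} (hρ : 0 < ρ) (hη : IsCutoff C₁ ρ η)
    {K U : Set E3} (hK : K ⊆ closedBall (0 : E3) ρ) (hU : IsOpen U) (hKU : K ⊆ U) {w : E3 → ℝ}
    (hw : ContDiff ℝ (⊤ : ℕ∞) w) (hw0 : ∀ x ∈ U, w x = 0) :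
    capa K * (∫ x in ball (0 : E3) (2 * ρ), (w x) ^ 2) ≤
      (8192 * π * C₁ ^ 2 + 64 / 3 * π * (768 * C₁ ^ 2 + 2)) * ρ ^ 3 *
        ∫ x in ball (0 : E3) (2 * ρ), sgrad w x := by
  have hwc := hw.continuous
  obtain ⟨a, ha⟩ := poincare hw (r := 2 * ρ) (by positivity)
  have h1 := capa_mul_sq_le hρ hη hK hU hKU hw hw0 a
  have h2 := capa_le_radius hρ hη hK
  have h0 := capa_nonneg K
  set D := ∫ x in ball (0 : E3) (2 * ρ), (w x - a) ^ 2 with hD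
  set G := ∫ x in ball (0 : E3) (2 * ρ), sgrad w x with hG
  have n1 : 0 ≤ D := integral_nonneg fun x => sq_nonneg _
  have n2 : 0 ≤ G := integral_nonneg fun x => sgrad_nonneg _ _
  have i1 : IntegrableOn (fun x => 2 * (w x - a) ^ 2) (ball (0 : E3) (2 * ρ)) :=
    integrableOn_ball_of_continuous (by fun_prop) _
  have i2 : IntegrableOn (fun _ : E3 => 2 * a ^ 2) (ball (0 : E3) (2 * ρ)) :=
    integrableOn_ball_of_continuous (by fun_prop) _
  have h3 : ∫ x in ball (0 : E3) (2 * ρ), (w x) ^ 2 ≤ 2 * D + 64 / 3 * π * ρ ^ 3 * a ^ 2 := by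
    have := setIntegral_mono_on (integrableOn_ball_of_continuous (hwc.pow 2) (2 * ρ)) (i1.add i2)
      measurableSet_ball fun x _ => (by
        simp only [Pi.add_apply]
        nlinarith [sq_nonneg (w x - 2 * a)] : (w x) ^ 2 ≤ _)
    refine this.trans (le_of_eq ?_)
    rw [integral_add' i1 i2, integral_const_mul, setIntegral_const,
      volume_real_ball_zero (by positivity), smul_eq_mul]
    ring
  have h4 : 6 * (C₁ / ρ) ^ 2 * D ≤ 768 * C₁ ^ 2 * G := by
    calc 6 * (C₁ / ρ) ^ 2 * D ≤ 6 * (C₁ / ρ) ^ 2 * (32 * (2 * ρ) ^ 2 * G) := by gcongr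
      _ = 768 * C₁ ^ 2 * G := by field_simp; ring
  calc capa K * (∫ x in ball (0 : E3) (2 * ρ), (w x) ^ 2)
      ≤ capa K * (2 * D + 64 / 3 * π * ρ ^ 3 * a ^ 2) := by gcongr
    _ = capa K * (2 * D) + 64 / 3 * π * ρ ^ 3 * (capa K * a ^ 2) := by ring
    _ ≤ 32 * π * C₁ ^ 2 * ρ * (2 * (32 * (2 * ρ) ^ 2 * G)) +
        64 / 3 * π * ρ ^ 3 * (768 * C₁ ^ 2 * G + 2 * G) := by
        gcongr
        linarith
    _ = _ := by ring

/-- For `u ∈ H̊¹(Ω)` the capacity of the complement of `Ω` in `B̄_ρ` controls `∫ |u|²`. -/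
lemma capa_poincare : ∃ C, 0 < C ∧ ∀ (Ω : Set E3) (u : E3 → Fin 3 → ℝ) (ρ : ℝ), IsOpen Ω →
    MemH10 Ω u → 0 < ρ →
    capa (closedBall (0 : E3) ρ \ Ω) ≤ C * ρ ∧
    capa (closedBall (0 : E3) ρ \ Ω) * (∫ x in Ω ∩ ball (0 : E3) (2 * ρ), vsq u x) ≤
      C * ρ ^ 3 * ∫ x in Ω ∩ ball (0 : E3) (2 * ρ), gsq u x := by
  obtain ⟨C₁, hC₁, hcut⟩ := exists_cutoff
  set C := 8192 * π * C₁ ^ 2 + 64 / 3 * π * (768 * C₁ ^ 2 + 2) with hC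
  have hC0 : 0 < C := by positivity
  refine ⟨4 * C, by positivity, fun Ω u ρ hΩ hu hρ => ?_⟩
  obtain ⟨η, hη⟩ := hcut ρ hρ
  set K := closedBall (0 : E3) ρ \ Ω with hK
  have hKb : K ⊆ closedBall (0 : E3) ρ := Set.sdiff_subset
  have h0 := capa_nonneg K
  refine ⟨(capa_le_radius hρ hη hKb).trans ?_, ?_⟩
  · have : 32 * π * C₁ ^ 2 ≤ 4 * C := by
      have : 0 ≤ π * C₁ ^ 2 := by positivity
      rw [hC]
      nlinarith [Real.pi_pos]
    gcongr
  have htest : ∀ w, IsTestOn Ω w → capa K * (∫ x in ball (0 : E3) (2 * ρ), vsq w x) ≤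
      C * ρ ^ 3 * ∫ x in ball (0 : E3) (2 * ρ), gsq w x := by
    intro w hw
    have hws : ∀ i, ContDiff ℝ (⊤ : ℕ∞) fun z => w z i := fun i => (hw.comp i).1
    have h1 : ∀ i, capa K * (∫ x in ball (0 : E3) (2 * ρ), (w x i) ^ 2) ≤
        C * ρ ^ 3 * ∫ x in ball (0 : E3) (2 * ρ), sgrad (fun z => w z i) x := fun i =>
      capa_poincare_scalar hρ hη hKb (U := (tsupport w)ᶜ) (isClosed_tsupport w).isOpen_compl
        (fun x hx hx' => hx.2 (hw.2.2 hx')) (hws i)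
        fun x hx => by rw [image_eq_zero_of_notMem_tsupport hx]; rfl
    simp only [vsq]
    have e2 : ∀ x, gsq w x = ∑ i, sgrad (fun z => w z i) x := fun x => rfl
    simp only [e2]
    have hc2 : ∀ i, Continuous fun x => (w x i) ^ 2 := fun i => (hws i).continuous.pow 2
    rw [integral_finsetSum _ fun i _ => integrableOn_ball_of_continuous (hc2 i) _,
      integral_finsetSum _ fun i _ => integrableOn_ball_of_continuous (continuous_sgrad (hws i)) _,
      Finset.mul_sum, Finset.mul_sum]
    exact Finset.sum_le_sum fun i _ => h1 i
  set O := Ω ∩ ball (0 : E3) (2 * ρ) with hO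
  have hOm : MeasurableSet O := (hΩ.inter isOpen_ball).measurableSet
  have hOs : O ⊆ Ω := Set.inter_subset_left
  set V := ∫ x in O, vsq u x with hV
  set G := ∫ x in O, gsq u x with hG
  have key : ∀ ε : ℝ, 0 < ε → capa K * V ≤ 2 * (C * ρ ^ 3 * (2 * G + 2 * ε)) + capa K * (2 * ε) := by
    intro ε hε
    obtain ⟨w, hw⟩ := hu.approx hΩ hε
    have a1 : V ≤ 2 * (∫ x in ball (0 : E3) (2 * ρ), vsq w x) + 2 * ε := by
      have b1 := setIntegral_mono_on ((hu.int_vsq hΩ).mono_set hOs)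
        ((hw.test.int_vsq.integrableOn.const_mul 2).add ((hw.int_v.mono_set hOs).const_mul 2)) hOm
        fun x _ => vsq_le_left u w x
      rw [integral_add' (hw.test.int_vsq.integrableOn.const_mul 2)
        ((hw.int_v.mono_set hOs).const_mul 2), integral_const_mul, integral_const_mul] at b1
      have b2 : ∫ x in O, vsq w x ≤ ∫ x in ball (0 : E3) (2 * ρ), vsq w x :=
        setIntegral_mono_set hw.test.int_vsq.integrableOn
          (Eventually.of_forall fun x => vsq_nonneg _ x)
          (LE.le.eventuallyLE Set.inter_subset_right)
      have b3 : ∫ x in O, vsq (fun z i => u z i - w z i) x ≤ ε :=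
        (setIntegral_mono_set hw.int_v (Eventually.of_forall fun x => vsq_nonneg _ x)
          (LE.le.eventuallyLE hOs)).trans hw.lt_v.le
      linarith
    have a2 : ∫ x in ball (0 : E3) (2 * ρ), gsq w x ≤ 2 * G + 2 * ε := by
      have b0 : ∫ x in ball (0 : E3) (2 * ρ), gsq w x = ∫ x in O, gsq w x := by
        refine setIntegral_eq_of_subset_of_forall_sdiff_eq_zero measurableSet_ball
          Set.inter_subset_right fun x hx => ?_
        exact gsq_zero fun h => hx.2 ⟨hw.test.2.2 h, hx.1⟩
      rw [b0]
      have b1 := setIntegral_mono_on hw.test.int_gsq.integrableOn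
        ((((hu.int_gsq hΩ).mono_set hOs).const_mul 2).add ((hw.int_g.mono_set hOs).const_mul 2)) hOm
        fun x hx => gsq_le_right (hu.smooth hΩ x (hOs hx)) (hw.test.1.contDiffAt (x := x))
      rw [integral_add' (((hu.int_gsq hΩ).mono_set hOs).const_mul 2)
        ((hw.int_g.mono_set hOs).const_mul 2), integral_const_mul, integral_const_mul] at b1
      have b3 : ∫ x in O, gsq (fun z i => u z i - w z i) x ≤ ε :=
        (setIntegral_mono_set hw.int_g (Eventually.of_forall fun x => gsq_nonneg _ x)
          (LE.le.eventuallyLE hOs)).trans hw.lt_g.le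
      linarith
    have a3 := htest w hw.test
    calc capa K * V ≤ capa K * (2 * (∫ x in ball (0 : E3) (2 * ρ), vsq w x) + 2 * ε) := by gcongr
      _ = 2 * (capa K * ∫ x in ball (0 : E3) (2 * ρ), vsq w x) + capa K * (2 * ε) := by ring
      _ ≤ 2 * (C * ρ ^ 3 * (2 * G + 2 * ε)) + capa K * (2 * ε) := by
          have a4 := a3.trans (mul_le_mul_of_nonneg_left a2 (by positivity : 0 ≤ C * ρ ^ 3))
          linarith
  have f2 : Tendsto (fun ε : ℝ => 2 * (C * ρ ^ 3 * (2 * G + 2 * ε)) + capa K * (2 * ε))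
      (nhdsWithin 0 (Set.Ioi 0)) (nhds (4 * C * ρ ^ 3 * G)) :=
    Tendsto.mono_left (Continuous.tendsto' (by fun_prop) _ _ (by ring)) nhdsWithin_le_nhds
  exact ge_of_tendsto f2 (by
    filter_upwards [self_mem_nhdsWithin] with t ht using key t ht)

/-! ### The Wiener integral -/

/-- The weighted Dirichlet integral of a solution with weight `|x|⁻¹` is finite near `0`. -/
lemma weighted_finite {α c₀ : ℝ} (hc₀ : 0 < c₀) (hQPD : QPDhyp α c₀) {Ω : Set E3} (hΩ : IsOpen Ω)
    (h0 : (0 : E3) ∈ frontier Ω) {u : E3 → Fin 3 → ℝ} (hu : MemH10 Ω u) {ρ : ℝ} (hρ : 0 < ρ)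
    (hL : ∀ x ∈ Ω, x ∈ ball (0 : E3) (2 * ρ) → ∀ i, lame α u x i = 0) :
    ∫⁻ x in Ω ∩ ball (0 : E3) ρ, ENNReal.ofReal (gsq u x * ‖x‖⁻¹) < ⊤ := by
  obtain ⟨C, -, hmain⟩ := main_est hc₀ hQPD
  have h0Ω : (0 : E3) ∉ Ω := by
    have := h0.2
    rwa [hΩ.interior_eq] at this
  set N := C * ∫ x in Ω ∩ ball (0 : E3) (2 * ρ), ((ρ ^ 3)⁻¹ * vsq u x + ρ⁻¹ * gsq u x) with hN
  let A : ℕ → Set E3 := fun n => Ω ∩ {x : E3 | ((n : ℝ) + 1)⁻¹ < ‖x‖ ∧ ‖x‖ < ρ}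
  have hA : ∀ n, ∫⁻ x in A n, ENNReal.ofReal (gsq u x * ‖x‖⁻¹) ≤ ENNReal.ofReal N := by
    intro n
    have hn : (0 : ℝ) < ((n : ℝ) + 1)⁻¹ := by positivity
    obtain ⟨y, hyΩ, hy⟩ := Metric.mem_closure_iff.mp h0.1 (min ((n : ℝ) + 1)⁻¹ (ρ / 2))
      (lt_min hn (by positivity))
    rw [dist_zero_left, lt_min_iff] at hy
    have h1 := hmain Ω u ρ y ((n : ℝ) + 1)⁻¹ hΩ hu hρ hL hyΩ hy.2 hy.1
    rw [← ofReal_integral_eq_lintegral_ofReal (integrableOn_annulus hΩ hu hn ρ)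
      (Eventually.of_forall fun x => mul_nonneg (gsq_nonneg _ _) (by positivity))]
    apply ENNReal.ofReal_le_ofReal
    have := vsq_nonneg u y
    linarith
  have hmono : Monotone A := by
    intro m n hmn x hx
    refine ⟨hx.1, lt_of_le_of_lt ?_ hx.2.1, hx.2.2⟩
    gcongr
  have hU : Ω ∩ ball (0 : E3) ρ ⊆ ⋃ n, A n := by
    rintro x ⟨hx, hxρ⟩
    have hx0 : 0 < ‖x‖ := norm_pos_iff.mpr fun h => h0Ω (h ▸ hx)
    obtain ⟨n, hn⟩ := exists_nat_one_div_lt hx0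
    exact Set.mem_iUnion.mpr ⟨n, hx, by simpa using hn, mem_ball_zero_iff.mp hxρ⟩
  calc ∫⁻ x in Ω ∩ ball (0 : E3) ρ, ENNReal.ofReal (gsq u x * ‖x‖⁻¹)
      ≤ ∫⁻ x in ⋃ n, A n, ENNReal.ofReal (gsq u x * ‖x‖⁻¹) := lintegral_mono_set hU
    _ = ⨆ n, ∫⁻ x in A n, ENNReal.ofReal (gsq u x * ‖x‖⁻¹) :=
        setLIntegral_iUnion_of_directed _ hmono.directed_le
    _ ≤ ENNReal.ofReal N := iSup_le hA
    _ < ⊤ := ENNReal.ofReal_lt_top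

/-- Pointwise values of a solution near `0`, weighted by the capacity of the complement. -/
lemma capa_mul_vsq_le {α c₀ : ℝ} (hc₀ : 0 < c₀) (hQPD : QPDhyp α c₀) : ∃ C, 0 < C ∧
    ∀ (Ω : Set E3) (u : E3 → Fin 3 → ℝ) (ρ : ℝ) (y : E3), IsOpen Ω → MemH10 Ω u → 0 < ρ →
    (∀ x ∈ Ω, x ∈ ball (0 : E3) (2 * ρ) → ∀ i, lame α u x i = 0) → y ∈ Ω → ‖y‖ < ρ / 2 →
    capa (closedBall (0 : E3) ρ \ Ω) * vsq u y ≤ C * ∫ x in Ω ∩ ball (0 : E3) (2 * ρ), gsq u x := by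
  obtain ⟨C, hC, hmain⟩ := main_est hc₀ hQPD
  obtain ⟨C', hC', hcap⟩ := capa_poincare
  refine ⟨C * (2 * C'), by positivity, fun Ω u ρ y hΩ hu hρ hL hy hyρ => ?_⟩
  have h1 := hmain Ω u ρ y ρ hΩ hu hρ hL hy hyρ (by linarith)
  obtain ⟨h2, h3⟩ := hcap Ω u ρ hΩ hu hρ
  have h0 := capa_nonneg (closedBall (0 : E3) ρ \ Ω)
  set k := capa (closedBall (0 : E3) ρ \ Ω)
  have hsub : Ω ∩ ball (0 : E3) (2 * ρ) ⊆ Ω := Set.inter_subset_left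
  rw [integral_add (((hu.int_vsq hΩ).mono_set hsub).const_mul _)
    (((hu.int_gsq hΩ).mono_set hsub).const_mul _), integral_const_mul, integral_const_mul] at h1
  set V := ∫ x in Ω ∩ ball (0 : E3) (2 * ρ), vsq u x
  have hG0 : 0 ≤ ∫ x in Ω ∩ ball (0 : E3) (2 * ρ), gsq u x := integral_nonneg fun x => gsq_nonneg _ _
  set G := ∫ x in Ω ∩ ball (0 : E3) (2 * ρ), gsq u x
  have hI0 : 0 ≤ ∫ x in Ω ∩ {x : E3 | ρ < ‖x‖ ∧ ‖x‖ < ρ}, gsq u x * ‖x‖⁻¹ :=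
    integral_nonneg fun x => mul_nonneg (gsq_nonneg _ _) (by positivity)
  calc k * vsq u y ≤ k * (C * ((ρ ^ 3)⁻¹ * V + ρ⁻¹ * G)) := by
        gcongr
        linarith
    _ = C * ((ρ ^ 3)⁻¹ * (k * V) + ρ⁻¹ * (k * G)) := by ring
    _ ≤ C * ((ρ ^ 3)⁻¹ * (C' * ρ ^ 3 * G) + ρ⁻¹ * (C' * ρ * G)) := by gcongr
    _ = C * (2 * C') * G := by field_simp; ring

lemma lintegral_inv_sq {M c : ℝ} (hM : 0 ≤ M) (hc : 0 < c) :
    ∫⁻ ρ in Set.Ioi c, ENNReal.ofReal (M / ρ ^ 2) = ENNReal.ofReal (M / c) := by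
  have e : ∀ ρ ∈ Set.Ioi c, M / ρ ^ 2 = M * ρ ^ (-2 : ℝ) := by
    intro ρ hρ
    have : 0 < ρ := hc.trans hρ
    rw [Real.rpow_neg this.le, Real.rpow_two, div_eq_mul_inv]
  rw [setLIntegral_congr_fun measurableSet_Ioi fun ρ hρ => by rw [e ρ hρ],
    ← ofReal_integral_eq_lintegral_ofReal
      ((integrableOn_Ioi_rpow_of_lt (by norm_num) hc).const_mul M), integral_const_mul,
    integral_Ioi_rpow_of_lt (by norm_num) hc]
  · congr 1
    norm_num
    rw [Real.rpow_neg_one, div_eq_mul_inv]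
  · filter_upwards [ae_restrict_mem measurableSet_Ioi] with ρ hρ
    have : 0 < ρ := hc.trans hρ
    positivity

/-- Tonelli: a function `κ` with `κ ρ ≤ M ∫_{Ω ∩ B_{2ρ}} |Du|²` has
`∫ κ ρ⁻² dρ ≤ 2 M ∫ |Du|² |x|⁻¹ dx`. -/
lemma wiener_tonelli {Ω : Set E3} (hΩ : IsOpen Ω) (h0Ω : (0 : E3) ∉ Ω) {u : E3 → Fin 3 → ℝ}
    (hu : MemH10 Ω u) {κ : ℝ → ℝ} {M ρ₁ : ℝ} (hM : 0 ≤ M)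
    (hκ : ∀ ρ, 0 < ρ → ρ ≤ ρ₁ → κ ρ ≤ M * ∫ x in Ω ∩ ball (0 : E3) (2 * ρ), gsq u x) :
    ∫⁻ ρ in Set.Ioc 0 ρ₁, ENNReal.ofReal (κ ρ / ρ ^ 2) ≤
      ENNReal.ofReal (2 * M) * ∫⁻ x in Ω ∩ ball (0 : E3) (2 * ρ₁),
        ENNReal.ofReal (gsq u x * ‖x‖⁻¹) := by
  classical
  set g : E3 → ℝ := Ω.piecewise (gsq u) (fun _ => 0) with hg
  have hgm : Measurable g :=
    (contOn_gsq (hu.smooth hΩ)).measurable_piecewise continuousOn_const hΩ.measurableSet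
  have hgΩ : ∀ x ∈ Ω, g x = gsq u x := fun x hx => Set.piecewise_eq_of_mem _ _ _ hx
  set T := Ω ∩ ball (0 : E3) (2 * ρ₁) with hT
  have hTm : MeasurableSet T := (hΩ.inter isOpen_ball).measurableSet
  let S : Set (ℝ × E3) := {p | ‖p.2‖ < 2 * p.1}
  have hS : MeasurableSet S := (isOpen_lt (by fun_prop) (by fun_prop)).measurableSet
  let H : ℝ → E3 → ENNReal := fun ρ x =>
    S.indicator (fun p => ENNReal.ofReal (M / p.1 ^ 2) * ENNReal.ofReal (g p.2)) (ρ, x)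
  have hH : Measurable (Function.uncurry H) := by
    have : Measurable fun p : ℝ × E3 => ENNReal.ofReal (M / p.1 ^ 2) * ENNReal.ofReal (g p.2) := by
      fun_prop
    exact this.indicator hS
  have h1 : ∀ ρ ∈ Set.Ioc 0 ρ₁, ENNReal.ofReal (κ ρ / ρ ^ 2) ≤ ∫⁻ x in T, H ρ x := by
    rintro ρ ⟨hρ, hρ1⟩
    have hsub : Ω ∩ ball (0 : E3) (2 * ρ) ⊆ T :=
      Set.inter_subset_inter_right _ (ball_subset_ball (by linarith))
    calc ENNReal.ofReal (κ ρ / ρ ^ 2)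
        ≤ ENNReal.ofReal (M / ρ ^ 2 * ∫ x in Ω ∩ ball (0 : E3) (2 * ρ), gsq u x) := by
          apply ENNReal.ofReal_le_ofReal
          rw [div_mul_eq_mul_div]
          gcongr
          exact hκ ρ hρ hρ1
      _ = ENNReal.ofReal (M / ρ ^ 2) * ∫⁻ x in Ω ∩ ball (0 : E3) (2 * ρ),
            ENNReal.ofReal (gsq u x) := by
          rw [ENNReal.ofReal_mul (by positivity), ofReal_integral_eq_lintegral_ofReal
            ((hu.int_gsq hΩ).mono_set Set.inter_subset_left)
            (Eventually.of_forall fun x => gsq_nonneg _ _)]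
      _ = ∫⁻ x in Ω ∩ ball (0 : E3) (2 * ρ), H ρ x := by
          rw [← lintegral_const_mul' _ _ ENNReal.ofReal_ne_top]
          refine setLIntegral_congr_fun (hΩ.inter isOpen_ball).measurableSet fun x hx => ?_
          have hxS : (ρ, x) ∈ S := mem_ball_zero_iff.mp hx.2
          simp only [H, Set.indicator_of_mem hxS, hgΩ x hx.1]
      _ ≤ ∫⁻ x in T, H ρ x := lintegral_mono_set hsub
  have h2 : ∀ x ∈ T, ∫⁻ ρ in Set.Ioc 0 ρ₁, H ρ x ≤
      ENNReal.ofReal (2 * M) * ENNReal.ofReal (gsq u x * ‖x‖⁻¹) := by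
    rintro x ⟨hxΩ, -⟩
    have hx0 : 0 < ‖x‖ := norm_pos_iff.mpr fun h => h0Ω (h ▸ hxΩ)
    calc ∫⁻ ρ in Set.Ioc 0 ρ₁, H ρ x ≤ ∫⁻ ρ, H ρ x := setLIntegral_le_lintegral _ _
      _ = ∫⁻ ρ, (Set.Ioi (‖x‖ / 2)).indicator
            (fun ρ => ENNReal.ofReal (M / ρ ^ 2) * ENNReal.ofReal (gsq u x)) ρ := by
          refine lintegral_congr fun ρ => ?_
          simp only [H, Set.indicator_apply, S, Set.mem_ofPred_eq, Set.mem_Ioi, hgΩ x hxΩ]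
          have : ‖x‖ < 2 * ρ ↔ ‖x‖ / 2 < ρ := by constructor <;> intro h <;> linarith
          simp only [this]
      _ = ENNReal.ofReal (M / (‖x‖ / 2)) * ENNReal.ofReal (gsq u x) := by
          rw [lintegral_indicator measurableSet_Ioi,
            lintegral_mul_const' _ _ ENNReal.ofReal_ne_top, lintegral_inv_sq hM (by positivity)]
      _ = _ := by
          rw [← ENNReal.ofReal_mul (by positivity), ← ENNReal.ofReal_mul (by positivity)]
          congr 1
          field_simp
  calc ∫⁻ ρ in Set.Ioc 0 ρ₁, ENNReal.ofReal (κ ρ / ρ ^ 2)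
      ≤ ∫⁻ ρ in Set.Ioc 0 ρ₁, ∫⁻ x in T, H ρ x := setLIntegral_mono' measurableSet_Ioc h1
    _ = ∫⁻ x in T, ∫⁻ ρ in Set.Ioc 0 ρ₁, H ρ x := lintegral_lintegral_swap hH.aemeasurable
    _ ≤ ∫⁻ x in T, ENNReal.ofReal (2 * M) * ENNReal.ofReal (gsq u x * ‖x‖⁻¹) :=
        setLIntegral_mono' hTm h2
    _ = _ := lintegral_const_mul' _ _ ENNReal.ofReal_ne_top

/-- Under (QPD), divergence of the Wiener integral at a boundary point `O = 0`
implies regularity of `O` with respect to the Lamé system: solutions of `Lu = f`,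
`f ∈ C₀^∞(Ω;ℝ³)`, `u ∈ H̊¹(Ω;ℝ³)`, tend to `0` at `O`. -/
theorem lame_wiener_criterion_regularity
    (Ω : Set E3) (hΩ : IsOpen Ω) (h0 : (0 : E3) ∈ frontier Ω)
    (α : ℝ) (hα : -1 < α) (c₀ : ℝ) (hc₀ : 0 < c₀) (hQPD : QPDhyp α c₀)
    (hWiener : ∫⁻ ρ in Set.Ioc (0 : ℝ) 1,
      ENNReal.ofReal (capa (closedBall (0 : E3) ρ \ Ω) / ρ ^ 2) = ⊤) :
    ∀ f : E3 → Fin 3 → ℝ, IsTestOn Ω f →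
    ∀ u : E3 → Fin 3 → ℝ, MemH10 Ω u →
    (∀ x ∈ Ω, ∀ i, lame α u x i = f x i) →
    Tendsto u (nhdsWithin (0 : E3) Ω) (nhds 0) := by
  intro f hf u hu hLu
  have h0Ω : (0 : E3) ∉ Ω := by
    have := h0.2
    rwa [hΩ.interior_eq] at this
  -- `f` vanishes near the origin, because its support is a compact subset of `Ω`
  obtain ⟨R, hR, hRf⟩ := Metric.isOpen_iff.mp (isClosed_tsupport f).isOpen_compl (0 : E3)
    fun h => h0Ω (hf.2.2 h)
  have hL : ∀ ρ, 2 * ρ ≤ R → ∀ x ∈ Ω, x ∈ ball (0 : E3) (2 * ρ) → ∀ i, lame α u x i = 0 := by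
    intro ρ hρ x hx hxρ i
    rw [hLu x hx i, image_eq_zero_of_notMem_tsupport (hRf (ball_subset_ball hρ hxρ))]
    rfl
  have hfin := weighted_finite hc₀ hQPD hΩ h0 hu (half_pos hR) (hL (R / 2) (by linarith))
  obtain ⟨C, hC, hdecay⟩ := capa_mul_vsq_le hc₀ hQPD
  obtain ⟨C', hC', hcap⟩ := capa_poincare
  have key : ∀ ε, 0 < ε → ∃ r, 0 < r ∧ ∀ y ∈ Ω, ‖y‖ < r → vsq u y < ε := by
    by_contra! hcon
    obtain ⟨ε, hε, hbad⟩ := hcon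
    set ρ₁ := min (R / 4) 1 with hρ₁
    have hρ₁0 : 0 < ρ₁ := lt_min (by positivity) one_pos
    have hρ₁R : ρ₁ ≤ R / 4 := min_le_left _ _
    have h1 : ∀ ρ, 0 < ρ → ρ ≤ ρ₁ → capa (closedBall (0 : E3) ρ \ Ω) ≤
        C / ε * ∫ x in Ω ∩ ball (0 : E3) (2 * ρ), gsq u x := by
      intro ρ hρ hρ1
      obtain ⟨y, hyΩ, hy, hyε⟩ := hbad (ρ / 2) (by positivity)
      have h2 := hdecay Ω u ρ y hΩ hu hρ (hL ρ (by linarith)) hyΩ hy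
      rw [div_mul_eq_mul_div, le_div_iff₀ hε]
      exact (mul_le_mul_of_nonneg_left hyε (capa_nonneg _)).trans h2
    have h2 : ∫⁻ ρ in Set.Ioc 0 ρ₁, ENNReal.ofReal (capa (closedBall (0 : E3) ρ \ Ω) / ρ ^ 2) < ⊤ := by
      refine (wiener_tonelli hΩ h0Ω hu (by positivity : 0 ≤ C / ε) h1).trans_lt ?_
      refine ENNReal.mul_lt_top ENNReal.ofReal_lt_top (lt_of_le_of_lt ?_ hfin)
      exact lintegral_mono_set (Set.inter_subset_inter_right _ (ball_subset_ball (by linarith)))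
    have h3 : ∫⁻ ρ in Set.Ioc ρ₁ 1, ENNReal.ofReal (capa (closedBall (0 : E3) ρ \ Ω) / ρ ^ 2) < ⊤ := by
      calc _ ≤ ∫⁻ _ in Set.Ioc ρ₁ 1, ENNReal.ofReal (C' / ρ₁) := by
            refine setLIntegral_mono' measurableSet_Ioc fun ρ hρ => ENNReal.ofReal_le_ofReal ?_
            have hρ0 : 0 < ρ := hρ₁0.trans hρ.1
            calc capa (closedBall (0 : E3) ρ \ Ω) / ρ ^ 2 ≤ C' * ρ / ρ ^ 2 := by
                  gcongr
                  exact (hcap Ω u ρ hΩ hu hρ0).1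
              _ = C' / ρ := by field_simp
              _ ≤ C' / ρ₁ := by
                  gcongr
                  exact hρ.1.le
        _ < ⊤ := by
            rw [setLIntegral_const]
            exact ENNReal.mul_lt_top ENNReal.ofReal_lt_top measure_Ioc_lt_top
    rw [← Set.Ioc_union_Ioc_eq_Ioc hρ₁0.le (min_le_right _ _ : ρ₁ ≤ 1)] at hWiener
    exact absurd hWiener
      (ne_of_lt ((lintegral_union_le _ _ _).trans_lt (ENNReal.add_lt_top.mpr ⟨h2, h3⟩)))
  rw [tendsto_pi_nhds]
  intro i
  rw [Metric.tendsto_nhdsWithin_nhds]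
  intro ε hε
  obtain ⟨r, hr, hv⟩ := key (ε ^ 2) (by positivity)
  refine ⟨r, hr, fun x hx hxr => ?_⟩
  rw [dist_zero_right] at hxr
  rw [Pi.zero_apply, dist_zero_right, Real.norm_eq_abs]
  exact abs_lt_of_sq_lt_sq ((comp_le_vsq u x i).trans_lt (hv x hx hxr)) hε.le
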